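/- Algebraic Bethe ansatz for the two-boundary transfer matrix: let M ∈ ℕ and v_1, …, v_M ∈ ℂ satisfy the genericity conditions sinh(2v_m) ≠ 0 and sinh(2v_m ± h) ≠ 0 for all m, and sinh(v_m ± v_k) ≠ 0 and sinh(v_m ± v_k ± h) ≠ 0 for all m ≠ k, together with the Bethe ansatz equations: for every 1 ≤ m ≤ M, sinh^{2N}(v_m + h/2) Δ_l(v_m) Δ_r(v_m) Π_{k≠m} sinh(v_m − v_k − h) sinh(v_m + v_k − h) = sinh^{2N}(v_m − h/2) Δ_l(−v_m) Δ_r(−v_m) Π_{k≠m} sinh(v_m − v_k + h) sinh(v_m + v_k + h). Then the Bethe vector |{v}⟩ := B(v_1) ⋯ B(v_M) |⇑⟩ satisfies, for every u ∈ ℂ with sinh(2u) ≠ 0 and sinh(u ± v_m) ≠ 0 for all m: t_{2b}(u) |{v}⟩ = Λ(u) |{v}⟩, where Λ(u) = sinh^{2N}(u + h/2) Δ_l(u) Δ_r(u) (sinh(2u+h)/sinh(2u)) Π_{m=1}^M [sinh(u−v_m−h) sinh(u+v_m−h) / (sinh(u−v_m) sinh(u+v_m))] + sinh^{2N}(u −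 h/2) Δ_l(−u) Δ_r(−u) (sinh(2u−h)/sinh(2u)) Π_{m=1}^M [sinh(u−v_m+h) sinh(u+v_m+h) / (sinh(u−v_m) sinh(u+v_m))]. -/

import Mathlib

noncomputable section

/-- Basis labels of `(ℂ²)^{⊗N}`: a state (0 = ↑, 1 = ↓) for each of the `N` sites. -/
abbrev Conf (N : ℕ) := Fin N → Fin 2

/-- The two-boundary space `H_{2b} = V_{α_l} ⊗ (ℂ²)^{⊗N} ⊗ V_{α_r}`, realised as finitely
supported complex functions on its basis labels `(n, f, m)`. -/
abbrev H2b (N : ℕ) := (ℕ × Conf N × ℕ) →₀ ℂ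

/-- The basis vector `|n⟩ ⊗ |f⟩ ⊗ |m⟩` of `H_{2b}`. -/
def ket2 {N : ℕ} (n : ℕ) (f : Conf N) (m : ℕ) : H2b N := Finsupp.single (n, f, m) 1

/-- The linear operator on `H_{2b}` determined by its values on the basis vectors. -/
def bigOp {N : ℕ} (t : ℕ → Conf N → ℕ → H2b N) : Module.End ℂ (H2b N) :=
  Finsupp.lsum ℂ fun p => LinearMap.toSpanSingleton ℂ (H2b N) (t p.1 p.2.1 p.2.2)

/-- The q-deformed number `[x]_q` with `q = e^h`. -/
def qnum (h x : ℂ) : ℂ :=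
  (Complex.exp (h * x) - Complex.exp (-(h * x))) / (Complex.exp h - Complex.exp (-h))

/-- An operator acting only on the left Verma factor, specified by its values
`g n : ℕ →₀ ℂ` on the Verma basis. -/
def lOp {N : ℕ} (g : ℕ → (ℕ →₀ ℂ)) : Module.End ℂ (H2b N) :=
  bigOp fun n f m => Finsupp.mapDomain (fun k => (k, f, m)) (g n)

/-- An operator acting only on the right Verma factor. -/
def rOp {N : ℕ} (g : ℕ → (ℕ →₀ ℂ)) : Module.End ℂ (H2b N) :=
  bigOp fun n f m => Finsupp.mapDomain (fun k => (n, f, k)) (g m)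

/-- Verma raising operator data: `E|n⟩ = [n]_q [α−n]_q |n−1⟩`, `E|0⟩ = 0`. -/
def gE (h α : ℂ) : ℕ → (ℕ →₀ ℂ) := fun n =>
  if n = 0 then 0 else (qnum h (n : ℂ) * qnum h (α - (n : ℂ))) • Finsupp.single (n - 1) 1

/-- Verma lowering operator data: `F|n⟩ = |n+1⟩`. -/
def gF : ℕ → (ℕ →₀ ℂ) := fun n => Finsupp.single (n + 1) 1

/-- Diagonal Verma operator data `sinh(x + cH) : |n⟩ ↦ sinh(x + c(α−1−2n))|n⟩`. -/
def gSinh (α x c : ℂ) : ℕ → (ℕ →₀ ℂ) := fun n =>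
  Complex.sinh (x + c * (α - 1 - 2 * (n : ℂ))) • Finsupp.single n 1

/-- Diagonal Verma operator data `e^{x + cH} : |n⟩ ↦ e^{x + c(α−1−2n)}|n⟩`. -/
def gExp (α x c : ℂ) : ℕ → (ℕ →₀ ℂ) := fun n =>
  Complex.exp (x + c * (α - 1 - 2 * (n : ℂ))) • Finsupp.single n 1

/-- Operators on `ℂ²_0 ⊗ H_{2b}` as 2×2 matrices in the auxiliary space with entries in
`End(H_{2b})`. -/
abbrev AuxMat (N : ℕ) := Matrix (Fin 2) (Fin 2) (Module.End ℂ (H2b N))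

/-- The scalar trigonometric R-matrix on `ℂ² ⊗ ℂ²` (ordered basis ↑↑, ↑↓, ↓↑, ↓↓). -/
def Rsc (h w : ℂ) : Matrix (Fin 2 × Fin 2) (Fin 2 × Fin 2) ℂ :=
  Matrix.of fun p r =>
    if p = r then (if p.1 = p.2 then Complex.sinh (w + h) else Complex.sinh w)
    else if p = ((0 : Fin 2), (1 : Fin 2)) ∧ r = ((1 : Fin 2), (0 : Fin 2)) then
      Complex.sinh h * Complex.exp w
    else if p = ((1 : Fin 2), (0 : Fin 2)) ∧ r = ((0 : Fin 2), (1 : Fin 2)) then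
      Complex.sinh h * Complex.exp (-w)
    else 0

/-- A two-spin R-matrix (auxiliary ⊗ site `j`) written as a 2×2 matrix in the auxiliary
space whose entries act on the `j`-th spin site of `H_{2b}`. -/
def siteAux {N : ℕ} (R4 : Matrix (Fin 2 × Fin 2) (Fin 2 × Fin 2) ℂ) (j : Fin N) :
    AuxMat N :=
  Matrix.of fun a a' => bigOp fun n f m =>
    ∑ s : Fin 2, R4 (a, s) (a', f j) • ket2 n (Function.update f j s) m

/-- `R_{0,i}(w)`. -/
def R0i (N : ℕ) (h w : ℂ) (j : Fin N) : AuxMat N := siteAux (Rsc h w) j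

/-- `R_{i,0}(w) = P R(w) P`. -/
def Ri0 (N : ℕ) (h w : ℂ) (j : Fin N) : AuxMat N :=
  siteAux (Matrix.of fun p r => Rsc h w p.swap r.swap) j

/-- `R_{0,V_{α_l}}(w)` acting on the auxiliary space and the left Verma factor. -/
def R0Vl (N : ℕ) (h αl w : ℂ) : AuxMat N :=
  !![lOp (gSinh αl (w + h / 2) (h / 2)),
      Complex.sinh h • (lOp (gExp αl (w + h / 2) (h / 2)) * lOp gF);
      Complex.sinh h • (lOp (gE h αl) * lOp (gExp αl (-w - h / 2) (-(h / 2)))),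
      lOp (gSinh αl (w + h / 2) (-(h / 2)))]

/-- `R_{V_{α_l},0}(w)`. -/
def RVl0 (N : ℕ) (h αl w : ℂ) : AuxMat N :=
  !![lOp (gSinh αl (w + h / 2) (h / 2)),
      Complex.sinh h • (lOp gF * lOp (gExp αl (-w - h / 2) (h / 2)));
      Complex.sinh h • (lOp (gExp αl (w + h / 2) (-(h / 2))) * lOp (gE h αl)),
      lOp (gSinh αl (w + h / 2) (-(h / 2)))]

/-- `R_{0,V_{α_r}}(w)` acting on the auxiliary space and the right Verma factor. -/
def R0Vr (N : ℕ) (h αr w : ℂ) : AuxMat N :=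
  !![rOp (gSinh αr (w + h / 2) (h / 2)),
      Complex.sinh h • (rOp (gExp αr (w + h / 2) (h / 2)) * rOp gF);
      Complex.sinh h • (rOp (gE h αr) * rOp (gExp αr (-w - h / 2) (-(h / 2)))),
      rOp (gSinh αr (w + h / 2) (-(h / 2)))]

/-- `R_{V_{α_r},0}(w)`. -/
def RVr0 (N : ℕ) (h αr w : ℂ) : AuxMat N :=
  !![rOp (gSinh αr (w + h / 2) (h / 2)),
      Complex.sinh h • (rOp gF * rOp (gExp αr (-w - h / 2) (h / 2)));
      Complex.sinh h • (rOp (gExp αr (w + h / 2) (-(h / 2))) * rOp (gE h αr)),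
      rOp (gSinh αr (w + h / 2) (-(h / 2)))]

/-- The monodromy `T(u) = R_{0,V_{α_r}}(u−ζ_r) R_{0,N}(u) ⋯ R_{0,1}(u) R_{0,V_{α_l}}(u−ζ_l)`. -/
def Tmon (N : ℕ) (h αl αr ζl ζr u : ℂ) : AuxMat N :=
  R0Vr N h αr (u - ζr) *
    ((List.finRange N).reverse.map fun i => R0i N h u i).prod *
    R0Vl N h αl (u - ζl)

/-- The monodromy `T̂(u) = R_{V_{α_l},0}(u+ζ_l) R_{1,0}(u) ⋯ R_{N,0}(u) R_{V_{α_r},0}(u+ζ_r)`. -/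
def Tmonhat (N : ℕ) (h αl αr ζl ζr u : ℂ) : AuxMat N :=
  RVl0 N h αl (u + ζl) *
    ((List.finRange N).map fun i => Ri0 N h u i).prod *
    RVr0 N h αr (u + ζr)

/-- The double-row monodromy `𝒯(u) = T(u−h/2) T̂(u−h/2)`. -/
def Tcal (N : ℕ) (h αl αr ζl ζr u : ℂ) : AuxMat N :=
  Tmon N h αl αr ζl ζr (u - h / 2) * Tmonhat N h αl αr ζl ζr (u - h / 2)

/-- The Bethe-ansatz creation operator `B(u)`, the upper-right entry of `𝒯(u)`. -/
def Bop (N : ℕ) (h αl αr ζl ζr u : ℂ) : Module.End ℂ (H2b N) :=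
  Tcal N h αl αr ζl ζr u 0 1

/-- The two-boundary transfer matrix `t_{2b}(u) = e^h 𝒜(u) + e^{−h} 𝒟(u)`. -/
def t2b (N : ℕ) (h αl αr ζl ζr u : ℂ) : Module.End ℂ (H2b N) :=
  Complex.exp h • Tcal N h αl αr ζl ζr u 0 0 + Complex.exp (-h) • Tcal N h αl αr ζl ζr u 1 1

/-- The reference state `|⇑⟩ = |0⟩ ⊗ |↑⟩^{⊗N} ⊗ |0⟩`. -/
def vac (N : ℕ) : H2b N := ket2 0 (fun _ => 0) 0

/-- The Bethe vector `B(v_1) ⋯ B(v_M) |⇑⟩`. -/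
def betheVec (N : ℕ) (h αl αr ζl ζr : ℂ) {M : ℕ} (v : Fin M → ℂ) : H2b N :=
  (((List.finRange M).map fun m => Bop N h αl αr ζl ζr (v m)).prod) (vac N)

/-- The boundary dressing function `Δ_{l/r}(u)`. -/
def Dlt (h α ζ u : ℂ) : ℂ :=
  Complex.sinh (u + h * (α - 1) / 2 - ζ) * Complex.sinh (u + h * (α - 1) / 2 + ζ)

/-!
Every boundary and bulk tensor factor carries an action of `U_q(sl₂)`, and all factors of the two
monodromies are the `L`-operators of these actions. The resulting double-row matrix therefore solves
the reflection equation, which is proved by dressing the identity matrix one factor at a time. Its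
crossing symmetry writes `sinh (2 * u) • D(u)` as a combination of `A(u)` and `A(-u)`, and these
obey exchange relations with the creation operators `B(v)` whose coefficients for `A(-u)` are those
for `A(u)` evaluated at `-u`. Moving `A(u)` and `A(-u)` through a product of `B(v_m)` down to the
reference state gives the wanted term plus one unwanted term for each root `v_m`, whose coefficient
is proportional to the difference of the two sides of the `m`-th Bethe equation. The operators
`B(u)` commute because the reflection equation says so up to factors `sinh` which do not vanish on a
dense set.
-/

namespace TwoBoundary

open Complex

section OffShell

variable {R V S P ι : Type*} [CommRing R] [AddCommGroup V] [Module R V] [DecidableEq ι]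
  (X : S → P → Module.End R V) (B : P → Module.End R V) (Ω : V)
  (a : S → P → R) (f : S → P → P → R) (g : S → S → P → P → R) (v : ι → P)

/-- The off-shell Bethe vector `∏_{i ∈ s} B(v_i) Ω` built from commuting creation operators. -/
def offShellVec (hB : ∀ x y, Commute (B x) (B y)) (s : Finset ι) : V :=
  s.noncommProd (fun i => B (v i)) (Pairwise.set_pairwise (fun _ _ _ => hB _ _) _) Ω

/-- The coefficient `a_σ(u) ∏_{k ∈ s} f_σ(u, v_k)` which the operator `X_σ(u)` picks up when it is
moved through the creation operators of `s` without exchanging its spectral parameter. -/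
def wantedCoeff (s : Finset ι) (σ : S) (u : P) : R :=
  a σ u * ∏ k ∈ s, f σ u (v k)

variable {X B Ω a f g v}

lemma offShellVec_insert (hB : ∀ x y, Commute (B x) (B y)) {s : Finset ι} {i : ι} (hi : i ∉ s) :
    offShellVec B Ω v hB (insert i s) = B (v i) (offShellVec B Ω v hB s) := by
  rw [offShellVec, Finset.noncommProd_insert_of_notMem _ _ _ _ hi]
  rfl

lemma wantedCoeff_insert {s : Finset ι} {i : ι} (hi : i ∉ s) (σ : S) (u : P) :
    wantedCoeff a f v (insert i s) σ u = f σ u (v i) * wantedCoeff a f v s σ u := by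
  rw [wantedCoeff, wantedCoeff, Finset.prod_insert hi]
  ring

variable [Fintype S]

variable (a f g v) in
/-- The coefficient of the unwanted vector in which the root `v_m` is replaced by `u`. -/
def unwantedCoeff (s : Finset ι) (m : ι) (σ : S) (u : P) : R :=
  ∑ τ, g σ τ u (v m) * wantedCoeff a f v (s.erase m) τ (v m)

lemma unwantedCoeff_insert_self {s : Finset ι} {i : ι} (hi : i ∉ s) (σ : S) (u : P) :
    unwantedCoeff a f g v (insert i s) i σ u
      = ∑ τ, g σ τ u (v i) * wantedCoeff a f v s τ (v i) := by
  rw [unwantedCoeff, Finset.erase_insert hi]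

lemma unwantedCoeff_insert {s : Finset ι} {i m : ι} (hi : i ∉ s) (hm : m ∈ s) {σ : S} {u : P}
    (hfg : ∀ τ, f σ u (v i) * g σ τ u (v m) + ∑ ρ, g σ ρ u (v i) * g ρ τ (v i) (v m)
      = g σ τ u (v m) * f τ (v m) (v i)) :
    unwantedCoeff a f g v (insert i s) m σ u
      = f σ u (v i) * unwantedCoeff a f g v s m σ u
        + ∑ ρ, g σ ρ u (v i) * unwantedCoeff a f g v s m ρ (v i) := by
  have him : i ≠ m := fun h => hi (h ▸ hm)
  have hi' : i ∉ s.erase m := fun h => hi (Finset.mem_of_mem_erase h)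
  simp only [unwantedCoeff, Finset.erase_insert_of_ne him, wantedCoeff_insert hi', Finset.mul_sum]
  rw [Finset.sum_comm, ← Finset.sum_add_distrib]
  refine Finset.sum_congr rfl fun τ _ => ?_
  simp only [← mul_assoc, ← Finset.sum_mul, ← hfg, add_mul]

/-- The exchange relation `hX` alone would produce `2^|s|` terms; the consistency `hfg` of its
coefficients collapses them to one unwanted vector for each root. -/
theorem apply_offShellVec {G : P → P → Prop} (hB : ∀ x y, Commute (B x) (B y))
    (hX : ∀ σ {x y}, G x y →
      X σ x * B y = f σ x y • (B y * X σ x) + ∑ τ, g σ τ x y • (B x * X τ y))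
    (hfg : ∀ σ τ {x y z}, G x y → G x z → G y z →
      f σ x y * g σ τ x z + ∑ ρ, g σ ρ x y * g ρ τ y z = g σ τ x z * f τ z y)
    (hΩ : ∀ σ x, X σ x Ω = a σ x • Ω) (s : Finset ι)
    (hs : (s : Set ι).Pairwise fun i j => G (v i) (v j))
    (σ : S) {u : P} (hu : ∀ i ∈ s, G u (v i)) :
    X σ u (offShellVec B Ω v hB s)
      = wantedCoeff a f v s σ u • offShellVec B Ω v hB s
        + ∑ m ∈ s, unwantedCoeff a f g v s m σ u • B u (offShellVec B Ω v hB (s.erase m)) := by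
  induction s using Finset.induction_on generalizing σ u with
  | empty =>
    have ψ_empty : offShellVec B Ω v hB ∅ = Ω := by
      rw [offShellVec, Finset.noncommProd_empty, Module.End.one_apply]
    simp [ψ_empty, wantedCoeff, hΩ]
  | insert i s hi ih =>
    set ψ := offShellVec B Ω v hB
    have ψ_insert : ∀ {t}, i ∉ t → ψ (insert i t) = B (v i) (ψ t) := offShellVec_insert hB
    have hs' : (s : Set ι).Pairwise fun i j => G (v i) (v j) :=
      hs.mono (by simp)
    have hus : ∀ j ∈ s, G u (v j) := fun j hj => hu j (Finset.mem_insert_of_mem hj)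
    have his : ∀ j ∈ s, G (v i) (v j) := fun j hj =>
      hs (by simp) (by simp [hj]) fun h => hi (h ▸ hj)
    have hui : G u (v i) := hu i (Finset.mem_insert_self i s)
    have exchange : X σ u (ψ (insert i s))
        = f σ u (v i) • B (v i) (X σ u (ψ s)) + ∑ τ, g σ τ u (v i) • B u (X τ (v i) (ψ s)) := by
      rw [ψ_insert hi, ← Module.End.mul_apply, hX σ hui]
      simp
    have unwanted : ∀ m ∈ s, unwantedCoeff a f g v (insert i s) m σ u •
          B u (ψ ((insert i s).erase m))
        = (f σ u (v i) * unwantedCoeff a f g v s m σ u) • B (v i) (B u (ψ (s.erase m)))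
          + ∑ τ, (g σ τ u (v i) * unwantedCoeff a f g v s m τ (v i)) •
            B u (B (v i) (ψ (s.erase m))) := by
      intro m hm
      have him : i ≠ m := fun h => hi (h ▸ hm)
      rw [Finset.erase_insert_of_ne him,
        ψ_insert fun h => hi (Finset.mem_of_mem_erase h),
        unwantedCoeff_insert hi hm fun τ => hfg σ τ hui (hus m hm) (his m hm),
        ← Module.End.mul_apply (B (v i)), (hB (v i) u).eq, Module.End.mul_apply, add_smul,
        Finset.sum_smul]
    rw [exchange, ih hs' σ hus, Finset.sum_insert hi, Finset.erase_insert hi,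
      Finset.sum_congr rfl unwanted, wantedCoeff_insert hi, unwantedCoeff_insert_self hi,
      ψ_insert hi, Finset.sum_add_distrib, Finset.sum_comm (s := s)]
    simp only [ih hs' _ his, map_add, map_sum, map_smul, smul_add, Finset.smul_sum, smul_smul,
      Finset.sum_add_distrib, Finset.sum_smul]
    abel

end OffShell

section ExchangeCoefficients

variable {h u v x y z : ℂ}

/-- The orbit of a spectral parameter under reflection: index `0` is the parameter itself and
index `1` its negative. -/
def refl (u : ℂ) : Fin 2 → ℂ := ![u, -u]

/-- The scattering factor `F(x, v)` of a particle of parameter `x` on the Bethe root `v` and on its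
mirror image. -/
def scatter (h x v : ℂ) : ℂ :=
  sinh (x - v - h) * sinh (x + v - h) / (sinh (x - v) * sinh (x + v))

/-- The kernel `e^(x - y) / sinh (x - y)` of the exchange terms. -/
def expKernel (x y : ℂ) : ℂ := exp (x - y) / sinh (x - y)

/-- The coefficient of the exchange relations in which the spectral parameters stay in place. -/
def keepCoeff (h : ℂ) (σ : Fin 2) (u v : ℂ) : ℂ := scatter h (refl u σ) v

/-- The dependence of the exchange terms on the operator being moved. -/
def leftWeight (h u : ℂ) : Fin 2 → ℂ := ![1, -sinh (2 * u + h)]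

/-- The dependence of the exchange terms on the operator produced. -/
def rightWeight (h v : ℂ) : Fin 2 → ℂ := ![sinh (2 * v - h), -1]

/-- The coefficient of the exchange relations in which the spectral parameters are swapped. -/
def swapCoeff (h : ℂ) (σ τ : Fin 2) (u v : ℂ) : ℂ :=
  sinh h / sinh (2 * v) * leftWeight h u σ * rightWeight h v τ * expKernel (refl u σ) (refl v τ)

/-- `v` is not a pole in `v` of the exchange relations between operators at `u` and `v`. -/
def IsGeneric (u v : ℂ) : Prop := sinh (2 * v) ≠ 0 ∧ sinh (u - v) ≠ 0 ∧ sinh (u + v) ≠ 0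

lemma sinh_sub_ne_zero_comm : sinh (x - y) ≠ 0 ↔ sinh (y - x) ≠ 0 := by
  rw [← neg_sub, sinh_neg, neg_ne_zero]

lemma IsGeneric.sinh_refl_sub_refl_ne_zero (H : IsGeneric u v) (σ τ : Fin 2) :
    sinh (refl u σ - refl v τ) ≠ 0 := by
  obtain ⟨-, hsub, hadd⟩ := H
  fin_cases σ <;> fin_cases τ
  · exact hsub
  · simpa [refl] using hadd
  · simpa [refl, ← neg_add', sinh_neg, -neg_add_rev] using hadd
  · simpa [refl, neg_add_eq_sub] using sinh_sub_ne_zero_comm.1 hsub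

lemma scatter_neg :
    scatter h (-u) v
      = sinh (u - v + h) * sinh (u + v + h) / (sinh (u - v) * sinh (u + v)) := by
  have neg_eq : ∀ {a b : ℂ}, a = -b → sinh a = -sinh b := fun h => by rw [h, sinh_neg]
  rw [scatter, neg_eq (by ring : -u - v - h = -(u + v + h)),
    neg_eq (by ring : -u + v - h = -(u - v + h)), neg_eq (by ring : -u - v = -(u + v)),
    neg_eq (by ring : -u + v = -(u - v)), neg_mul_neg, neg_mul_neg, mul_comm,
    mul_comm (sinh (u + v))]

/-- Partial fractions in `x`, with the poles at `v` and `-v`. -/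
lemma scatter_eq_sub (hv : sinh (2 * v) ≠ 0) (hsub : sinh (x - v) ≠ 0) (hadd : sinh (x + v) ≠ 0) :
    scatter h x v = cosh (2 * h) - sinh h / sinh (2 * v) *
      (sinh (2 * v - h) * (cosh (x - v) / sinh (x - v))
        + sinh (2 * v + h) * (cosh (x + v) / sinh (x + v))) := by
  have key : ∀ p q : ℂ, sinh (p - h) * sinh (q - h) * sinh (q - p)
      = cosh (2 * h) * (sinh p * sinh q * sinh (q - p))
        - sinh h * (sinh (q - p - h) * cosh p * sinh q + sinh (q - p + h) * cosh q * sinh p) := by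
    intro p q
    simp only [sinh_sub, sinh_add, cosh_two_mul, cosh_sub]
    ring
  have hkey := key (x - v) (x + v)
  rw [add_sub_sub_cancel, ← two_mul] at hkey
  rw [scatter]
  generalize sinh (2 * v) = d, sinh (2 * v - h) = d₁, sinh (2 * v + h) = d₂, cosh (2 * h) = c at *
  field_simp
  linear_combination hkey

lemma expKernel_mul_expKernel (hxy : sinh (x - y) ≠ 0) (hyz : sinh (y - z) ≠ 0)
    (hxz : sinh (x - z) ≠ 0) :
    expKernel x y * expKernel y z
      = expKernel x z * (cosh (x - y) / sinh (x - y) - cosh (z - y) / sinh (z - y)) := by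
  have hexp : exp (x - y) * exp (y - z) = exp (x - z) := by rw [← exp_add, sub_add_sub_cancel]
  have hsinh : sinh (x - z) = sinh (x - y) * cosh (y - z) + cosh (x - y) * sinh (y - z) := by
    rw [← sinh_add, sub_add_sub_cancel]
  rw [← neg_sub y z, sinh_neg, cosh_neg]
  simp only [expKernel]
  field_simp
  rw [hexp, hsinh]
  ring

lemma sum_expKernel_mul_expKernel (hv : sinh (2 * v) ≠ 0) (hxz : sinh (x - z) ≠ 0)
    (hx : ∀ ρ, sinh (x - refl v ρ) ≠ 0) (hz : ∀ ρ, sinh (z - refl v ρ) ≠ 0) :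
    scatter h x v * expKernel x z + sinh h / sinh (2 * v) *
        ∑ ρ, rightWeight h v ρ * leftWeight h v ρ *
          (expKernel x (refl v ρ) * expKernel (refl v ρ) z)
      = expKernel x z * scatter h z v := by
  simp only [fun ρ => expKernel_mul_expKernel (hx ρ) (sinh_sub_ne_zero_comm.1 (hz ρ)) hxz]
  have hx0 := hx 0
  have hx1 := hx 1
  have hz0 := hz 0
  have hz1 := hz 1
  simp only [Fin.sum_univ_two, refl, rightWeight, leftWeight, Matrix.cons_val_zero,
    Matrix.cons_val_one, sub_neg_eq_add] at hx0 hx1 hz0 hz1 ⊢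
  rw [scatter_eq_sub hv hx0 hx1, scatter_eq_sub hv hz0 hz1]
  ring

lemma keepCoeff_mul_swapCoeff (σ τ : Fin 2) {u v w : ℂ} (huv : IsGeneric u v) (huw : IsGeneric u w)
    (hvw : IsGeneric v w) :
    keepCoeff h σ u v * swapCoeff h σ τ u w + ∑ ρ, swapCoeff h σ ρ u v * swapCoeff h ρ τ v w
      = swapCoeff h σ τ u w * keepCoeff h τ w v := by
  have key := sum_expKernel_mul_expKernel (h := h) huv.1
    (huw.sinh_refl_sub_refl_ne_zero σ τ) (huv.sinh_refl_sub_refl_ne_zero σ)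
    fun ρ => sinh_sub_ne_zero_comm.1 (hvw.sinh_refl_sub_refl_ne_zero ρ τ)
  simp only [keepCoeff, swapCoeff, Fin.sum_univ_two] at key ⊢
  linear_combination (sinh h / sinh (2 * w) * leftWeight h u σ * rightWeight h w τ) * key

lemma expKernel_sub_expKernel_neg (hsub : sinh (u - y) ≠ 0) (hadd : sinh (u + y) ≠ 0) :
    expKernel u y - expKernel (-u) y = sinh (2 * u) / (sinh (u - y) * sinh (u + y)) := by
  have hnum : exp (u - y) * sinh (u + y) + exp (-u - y) * sinh (u - y) = sinh (2 * u) := by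
    simp only [Complex.sinh, mul_sub, mul_div_assoc', ← exp_add]
    ring_nf
  rw [expKernel, expKernel, ← hnum, ← neg_add', sinh_neg]
  field_simp
  ring

end ExchangeCoefficients

section BetheEquations

variable {V ι : Type*} [AddCommGroup V] [Module ℂ V] [DecidableEq ι] {h u : ℂ}

/-- The eigenvalues on the reference state of the two diagonal operators, in terms of the
eigenvalue `a` of the first one. -/
def vacuumEigenvalue (h : ℂ) (a : ℂ → ℂ) (σ : Fin 2) (u : ℂ) : ℂ :=
  ![a u, sinh (2 * u - h) * a (-u)] σ

/-- The weights of the diagonal operators in `sinh (2 u)` times the transfer matrix. -/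
def transferWeight (h u : ℂ) : Fin 2 → ℂ := ![sinh (2 * u + h), 1]

/-- The summand `a(u) ∏_{k ∈ s} F(u, v_k)` of the transfer matrix eigenvalue, up to its prefactor;
the other one is its value at `-u`. -/
def dressedVacuum (h : ℂ) (a : ℂ → ℂ) (v : ι → ℂ) (s : Finset ι) (u : ℂ) : ℂ :=
  a u * ∏ k ∈ s, scatter h u (v k)

variable {a : ℂ → ℂ} {v : ι → ℂ} {s : Finset ι}

lemma sum_transferWeight_mul_unwantedCoeff {m : ι}
    (hbae : dressedVacuum h a v (s.erase m) (v m) = dressedVacuum h a v (s.erase m) (-v m))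
    (hu : IsGeneric u (v m)) :
    ∑ σ, transferWeight h u σ * unwantedCoeff (vacuumEigenvalue h a) (keepCoeff h) (swapCoeff h)
      v s m σ u = 0 := by
  have hker := expKernel_sub_expKernel_neg hu.2.1 hu.2.2
  have hker' := expKernel_sub_expKernel_neg (u := u) (y := -v m)
    (by simpa using hu.2.2) (by simpa [← sub_eq_add_neg] using hu.2.1)
  have hsymm : expKernel u (v m) - expKernel (-u) (v m)
      = expKernel u (-v m) - expKernel (-u) (-v m) := by
    rw [hker, hker', sub_neg_eq_add, ← sub_eq_add_neg, mul_comm (sinh (u + v m))]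
  simp only [unwantedCoeff, wantedCoeff, Fin.sum_univ_two, transferWeight, swapCoeff, leftWeight,
    rightWeight, vacuumEigenvalue, keepCoeff, refl, Matrix.cons_val_zero, Matrix.cons_val_one]
  simp only [dressedVacuum] at hbae
  linear_combination (sinh (2 * u + h) * sinh h / sinh (2 * v m) * sinh (2 * v m - h)) *
    ((expKernel u (v m) - expKernel (-u) (v m)) * hbae +
      (a (-v m) * ∏ k ∈ s.erase m, scatter h (-v m) (v k)) * hsymm)

theorem sum_transferWeight_smul_apply_offShellVec {X : Fin 2 → ℂ → Module.End ℂ V}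
    {B : ℂ → Module.End ℂ V} {Ω : V} (hB : ∀ x y, Commute (B x) (B y))
    (hX : ∀ σ {x y}, IsGeneric x y →
      X σ x * B y = keepCoeff h σ x y • (B y * X σ x) + ∑ τ, swapCoeff h σ τ x y • (B x * X τ y))
    (hΩ : ∀ σ x, X σ x Ω = vacuumEigenvalue h a σ x • Ω)
    (hs : (s : Set ι).Pairwise fun i j => IsGeneric (v i) (v j))
    (hbae : ∀ m ∈ s,
      dressedVacuum h a v (s.erase m) (v m) = dressedVacuum h a v (s.erase m) (-v m))
    (hu : ∀ i ∈ s, IsGeneric u (v i)) :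
    ∑ σ, transferWeight h u σ • X σ u (offShellVec B Ω v hB s)
      = (sinh (2 * u + h) * dressedVacuum h a v s u + sinh (2 * u - h) * dressedVacuum h a v s (-u))
        • offShellVec B Ω v hB s := by
  have apply_vec σ := apply_offShellVec hB hX keepCoeff_mul_swapCoeff hΩ s hs σ hu
  have wanted : ∑ σ, transferWeight h u σ * wantedCoeff (vacuumEigenvalue h a) (keepCoeff h) v s σ u
      = sinh (2 * u + h) * dressedVacuum h a v s u
        + sinh (2 * u - h) * dressedVacuum h a v s (-u) := by
    simp only [Fin.sum_univ_two, transferWeight, wantedCoeff, vacuumEigenvalue, keepCoeff, refl,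
      dressedVacuum, Matrix.cons_val_zero, Matrix.cons_val_one]
    ring
  have unwanted : ∑ σ, ∑ m ∈ s, (transferWeight h u σ *
      unwantedCoeff (vacuumEigenvalue h a) (keepCoeff h) (swapCoeff h) v s m σ u) •
        B u (offShellVec B Ω v hB (s.erase m)) = 0 := by
    rw [Finset.sum_comm]
    refine Finset.sum_eq_zero fun m hm => ?_
    rw [← Finset.sum_smul, sum_transferWeight_mul_unwantedCoeff (hbae m hm) (hu m hm), zero_smul]
  simp only [apply_vec, smul_add, Finset.smul_sum, smul_smul, Finset.sum_add_distrib,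
    unwanted, add_zero, ← Finset.sum_smul, wanted]

end BetheEquations

section ReflectionEquation

variable {A : Type*} [Ring A]

/-- The action of an auxiliary-space matrix on the first of two auxiliary spaces. -/
def onFst (K : Matrix (Fin 2) (Fin 2) A) : Matrix (Fin 2 × Fin 2) (Fin 2 × Fin 2) A :=
  Matrix.kronecker K 1

/-- The action of an auxiliary-space matrix on the second of two auxiliary spaces. -/
def onSnd (K : Matrix (Fin 2) (Fin 2) A) : Matrix (Fin 2 × Fin 2) (Fin 2 × Fin 2) A :=
  Matrix.kronecker 1 K

lemma onFst_apply (K : Matrix (Fin 2) (Fin 2) A) (i i' j j' : Fin 2) :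
    onFst K (i, i') (j, j') = if i' = j' then K i j else 0 := by
  simp [onFst, Matrix.one_apply]

lemma onSnd_apply (K : Matrix (Fin 2) (Fin 2) A) (i i' j j' : Fin 2) :
    onSnd K (i, i') (j, j') = if i = j then K i' j' else 0 := by
  simp [onSnd, Matrix.one_apply]

lemma mul_onFst_apply (M : Matrix (Fin 2 × Fin 2) (Fin 2 × Fin 2) A) (K : Matrix (Fin 2) (Fin 2) A)
    (p : Fin 2 × Fin 2) (j j' : Fin 2) :
    (M * onFst K) p (j, j') = ∑ k, M p (k, j') * K k j := by
  simp [Matrix.mul_apply, Fintype.sum_prod_type, onFst_apply]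

lemma mul_onSnd_apply (M : Matrix (Fin 2 × Fin 2) (Fin 2 × Fin 2) A) (K : Matrix (Fin 2) (Fin 2) A)
    (p : Fin 2 × Fin 2) (j j' : Fin 2) :
    (M * onSnd K) p (j, j') = ∑ k, M p (j, k) * K k j' := by
  simp [Matrix.mul_apply, Fintype.sum_prod_type, onSnd_apply]

lemma onFst_mul (K L : Matrix (Fin 2) (Fin 2) A) : onFst (K * L) = onFst K * onFst L := by
  ext ⟨i, i'⟩ ⟨j, j'⟩
  simp [onFst, Matrix.mul_apply, Matrix.one_apply, Fintype.sum_prod_type]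

lemma onSnd_mul (K L : Matrix (Fin 2) (Fin 2) A) : onSnd (K * L) = onSnd K * onSnd L := by
  ext ⟨i, i'⟩ ⟨j, j'⟩
  simp [onSnd, Matrix.mul_apply, Matrix.one_apply, Fintype.sum_prod_type]

@[simp] lemma onFst_one : onFst (1 : Matrix (Fin 2) (Fin 2) A) = 1 :=
  Matrix.one_kronecker_one

@[simp] lemma onSnd_one : onSnd (1 : Matrix (Fin 2) (Fin 2) A) = 1 :=
  Matrix.one_kronecker_one

lemma commute_onFst_onSnd {K L : Matrix (Fin 2) (Fin 2) A}
    (H : ∀ i j k l, Commute (K i j) (L k l)) :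
    Commute (onFst K) (onSnd L) := by
  ext ⟨i, i'⟩ ⟨j, j'⟩
  simp [onFst, onSnd, Matrix.mul_apply, Matrix.one_apply, Fintype.sum_prod_type, (H _ _ _ _).eq]

lemma onFst_submatrix_swap (K : Matrix (Fin 2) (Fin 2) A) :
    (onFst K).submatrix Prod.swap Prod.swap = onSnd K := by
  ext ⟨i, i'⟩ ⟨j, j'⟩
  simp [onFst, onSnd, Matrix.one_apply]

lemma onSnd_submatrix_swap (K : Matrix (Fin 2) (Fin 2) A) :
    (onSnd K).submatrix Prod.swap Prod.swap = onFst K := by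
  ext ⟨i, i'⟩ ⟨j, j'⟩
  simp [onFst, onSnd, Matrix.one_apply]

variable [Algebra ℂ A]

variable (A) in
/-- The R-matrix `R(w)` on two auxiliary spaces, with entries in the algebra `A`. -/
def rMatrix (h w : ℂ) : Matrix (Fin 2 × Fin 2) (Fin 2 × Fin 2) A :=
  (Rsc h w).map (algebraMap ℂ A)

variable (A) in
/-- The R-matrix `P R(w) P` with the two auxiliary spaces exchanged. -/
def rMatrixSwap (h w : ℂ) : Matrix (Fin 2 × Fin 2) (Fin 2 × Fin 2) A :=
  (rMatrix A h w).submatrix Prod.swap Prod.swap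

lemma rMatrix_apply (h w : ℂ) (p q : Fin 2 × Fin 2) : rMatrix A h w p q = Rsc h w p q • 1 := by
  rw [rMatrix, Matrix.map_apply, Algebra.algebraMap_eq_smul_one]

lemma rMatrixSwap_apply (h w : ℂ) (p q : Fin 2 × Fin 2) :
    rMatrixSwap A h w p q = Rsc h w p.swap q.swap • 1 := by
  rw [rMatrixSwap, Matrix.submatrix_apply, rMatrix_apply]

lemma mul_rMatrix_apply (M : Matrix (Fin 2 × Fin 2) (Fin 2 × Fin 2) A) (h w : ℂ)
    (p q : Fin 2 × Fin 2) : (M * rMatrix A h w) p q = ∑ r, Rsc h w r q • M p r := by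
  simp [Matrix.mul_apply, rMatrix_apply]

lemma mul_rMatrixSwap_apply (M : Matrix (Fin 2 × Fin 2) (Fin 2 × Fin 2) A) (h w : ℂ)
    (p q : Fin 2 × Fin 2) :
    (M * rMatrixSwap A h w) p q = ∑ r, Rsc h w r.swap q.swap • M p r := by
  simp [Matrix.mul_apply, rMatrixSwap_apply]

lemma rMatrixSwap_submatrix_swap (h w : ℂ) :
    (rMatrixSwap A h w).submatrix Prod.swap Prod.swap = rMatrix A h w :=
  rfl

/-- The reflection equation for a boundary matrix `K(u)` in the auxiliary space. The parameter is
shifted so that `u ↦ -u` is the reflection, which turns the sum of the parameters into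
`u + v - h`. -/
def ReflectionEquation (h : ℂ) (K : ℂ → Matrix (Fin 2) (Fin 2) A) : Prop :=
  ∀ u v, rMatrix A h (u - v) * onFst (K u) * rMatrixSwap A h (u + v - h) * onSnd (K v)
    = onSnd (K v) * rMatrix A h (u + v - h) * onFst (K u) * rMatrixSwap A h (u - v)

/-- The exchange relations between a matrix `L(u)` and its partner `L'(u)` which make
`K(u) ↦ L(u) K(u) L'(u)` preserve the reflection equation. -/
structure IsLaxPair (h : ℂ) (L L' : ℂ → Matrix (Fin 2) (Fin 2) A) : Prop where
  left_left : ∀ u v, rMatrix A h (u - v) * onFst (L u) * onSnd (L v)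
    = onSnd (L v) * onFst (L u) * rMatrix A h (u - v)
  right_left : ∀ u v, onFst (L' u) * rMatrixSwap A h (u + v - h) * onSnd (L v)
    = onSnd (L v) * rMatrixSwap A h (u + v - h) * onFst (L' u)
  right_right : ∀ u v, rMatrixSwap A h (u - v) * onFst (L' u) * onSnd (L' v)
    = onSnd (L' v) * onFst (L' u) * rMatrixSwap A h (u - v)

variable {h : ℂ} {L L' K : ℂ → Matrix (Fin 2) (Fin 2) A}

lemma IsLaxPair.left_right (H : IsLaxPair h L L') (u v : ℂ) :
    onFst (L u) * rMatrix A h (u + v - h) * onSnd (L' v)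
      = onSnd (L' v) * rMatrix A h (u + v - h) * onFst (L u) := by
  have swapped := congrArg (fun X => X.submatrix Prod.swap Prod.swap) (H.right_left v u)
  simp only [← Matrix.submatrix_mul_equiv _ _ _ (Equiv.prodComm (Fin 2) (Fin 2)),
    Equiv.coe_prodComm, onFst_submatrix_swap, onSnd_submatrix_swap,
    rMatrixSwap_submatrix_swap, add_comm v u] at swapped
  exact swapped.symm

theorem ReflectionEquation.dress (hK : ReflectionEquation h K) (hL : IsLaxPair h L L')
    (hLK : ∀ u v i j k l, Commute (L u i j) (K v k l))
    (hLK' : ∀ u v i j k l, Commute (L' u i j) (K v k l)) :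
    ReflectionEquation h (fun u => L u * K u * L' u) := by
  intro u v
  have ll := hL.left_left u v
  have rl := hL.right_left u v
  have rr := hL.right_right u v
  have lr := hL.left_right u v
  have re := hK u v
  have LK := (commute_onFst_onSnd (hLK u v)).eq
  have KL := (commute_onFst_onSnd fun i j k l => (hLK v u k l i j).symm).eq
  have LK' := (commute_onFst_onSnd (hLK' u v)).eq
  have KL' := (commute_onFst_onSnd fun i j k l => (hLK' v u k l i j).symm).eq
  simp only [onFst_mul, onSnd_mul]
  set L₁ := onFst (L u)
  set L₂ := onSnd (L v)
  set L'₁ := onFst (L' u)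
  set L'₂ := onSnd (L' v)
  set K₁ := onFst (K u)
  set K₂ := onSnd (K v)
  set R := rMatrix A h (u - v)
  set S := rMatrixSwap A h (u - v)
  set R' := rMatrix A h (u + v - h)
  set S' := rMatrixSwap A h (u + v - h)
  calc R * (L₁ * K₁ * L'₁) * S' * (L₂ * K₂ * L'₂)
      = R * L₁ * K₁ * (L'₁ * S' * L₂) * K₂ * L'₂ := by noncomm_ring
    _ = R * L₁ * (K₁ * L₂) * S' * (L'₁ * K₂) * L'₂ := by rw [rl]; noncomm_ring
    _ = (R * L₁ * L₂) * K₁ * S' * K₂ * L'₁ * L'₂ := by rw [KL, LK']; noncomm_ring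
    _ = L₂ * L₁ * (R * K₁ * S' * K₂) * L'₁ * L'₂ := by rw [ll]; noncomm_ring
    _ = L₂ * (L₁ * K₂) * R' * K₁ * (S * L'₁ * L'₂) := by rw [re]; noncomm_ring
    _ = L₂ * K₂ * L₁ * R' * (K₁ * L'₂) * L'₁ * S := by rw [rr, LK]; noncomm_ring
    _ = L₂ * K₂ * (L₁ * R' * L'₂) * K₁ * L'₁ * S := by rw [KL']; noncomm_ring
    _ = L₂ * K₂ * L'₂ * R' * (L₁ * K₁ * L'₁) * S := by rw [lr]; noncomm_ring

lemma rMatrix_mul_rMatrixSwap (h x y : ℂ) :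
    rMatrix A h x * rMatrixSwap A h y = rMatrix A h y * rMatrixSwap A h x := by
  suffices Rsc h x * (Rsc h y).submatrix Prod.swap Prod.swap
      = Rsc h y * (Rsc h x).submatrix Prod.swap Prod.swap by
    simpa [rMatrix, rMatrixSwap, Matrix.map_mul, ← Matrix.submatrix_map] using
      congrArg (fun X => X.map (algebraMap ℂ A)) this
  ext ⟨i, i'⟩ ⟨j, j'⟩
  fin_cases i <;> fin_cases i' <;> fin_cases j <;> fin_cases j' <;>
    simp [Rsc, Matrix.mul_apply, Fintype.sum_prod_type] <;>
    simp only [Complex.sinh] <;> ring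

lemma reflectionEquation_one (h : ℂ) :
    ReflectionEquation h fun _ => (1 : Matrix (Fin 2) (Fin 2) A) := fun u v => by
  simp [rMatrix_mul_rMatrixSwap h (u - v)]

end ReflectionEquation

section Lax

/-- A representation of `U_q(sl₂)` in the algebra `B`, where `q = e^h`, `k = q^(H/2)`, `f = F` and
`e = sinh h • E`; the rescaling of `E` makes the relations polynomial. -/
structure UqTriple (h : ℂ) (B : Type*) [Ring B] [Algebra ℂ B] where
  k : B
  kInv : B
  e : B
  f : B
  k_mul_kInv : k * kInv = 1
  kInv_mul_k : kInv * k = 1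
  k_mul_e : k * e = exp h • (e * k)
  k_mul_f : k * f = (exp h)⁻¹ • (f * k)
  e_mul_f : e * f = f * e + (2 : ℂ)⁻¹ • (k * k - kInv * kInv)

namespace UqTriple

variable {h : ℂ} {B : Type*} [Ring B] [Algebra ℂ B] (S : UqTriple h B)

/-- The Lax matrix with the R-matrix `R_{0,V}`, for the parameter `w` shifted by `h/2`. -/
def lax (w : ℂ) : Matrix (Fin 2) (Fin 2) B :=
  !![(exp w / 2) • S.k - (exp (-w) / 2) • S.kInv, (sinh h * exp w) • (S.k * S.f);
    exp (-w) • (S.e * S.kInv), (exp w / 2) • S.kInv - (exp (-w) / 2) • S.k]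

/-- The Lax matrix of the R-matrix `R_{V,0}`, for the parameter `w` shifted by `h/2`. -/
def laxSwap (w : ℂ) : Matrix (Fin 2) (Fin 2) B :=
  !![(exp w / 2) • S.k - (exp (-w) / 2) • S.kInv, (sinh h * exp (-w)) • (S.f * S.k);
    exp w • (S.kInv * S.e), (exp w / 2) • S.kInv - (exp (-w) / 2) • S.k]

lemma kInv_mul_e : S.kInv * S.e = (exp h)⁻¹ • (S.e * S.kInv) := by
  rw [eq_inv_smul_iff₀ (exp_ne_zero h)]
  calc exp h • (S.kInv * S.e)
      = S.kInv * (exp h • (S.e * S.k)) * S.kInv := by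
        simp [mul_assoc, S.k_mul_kInv]
    _ = S.e * S.kInv := by rw [← S.k_mul_e, ← mul_assoc, S.kInv_mul_k, one_mul]

lemma kInv_mul_f : S.kInv * S.f = exp h • (S.f * S.kInv) := by
  rw [← inv_smul_eq_iff₀ (exp_ne_zero h)]
  calc (exp h)⁻¹ • (S.kInv * S.f)
      = S.kInv * ((exp h)⁻¹ • (S.f * S.k)) * S.kInv := by
        simp [mul_assoc, S.k_mul_kInv]
    _ = S.f * S.kInv := by rw [← S.k_mul_f, ← mul_assoc, S.kInv_mul_k, one_mul]

lemma k_mul_e_mul (x : B) : S.k * (S.e * x) = exp h • (S.e * (S.k * x)) := by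
  rw [← mul_assoc, S.k_mul_e, smul_mul_assoc, mul_assoc]

lemma k_mul_f_mul (x : B) : S.k * (S.f * x) = (exp h)⁻¹ • (S.f * (S.k * x)) := by
  rw [← mul_assoc, S.k_mul_f, smul_mul_assoc, mul_assoc]

lemma kInv_mul_e_mul (x : B) : S.kInv * (S.e * x) = (exp h)⁻¹ • (S.e * (S.kInv * x)) := by
  rw [← mul_assoc, S.kInv_mul_e, smul_mul_assoc, mul_assoc]

lemma kInv_mul_f_mul (x : B) : S.kInv * (S.f * x) = exp h • (S.f * (S.kInv * x)) := by
  rw [← mul_assoc, S.kInv_mul_f, smul_mul_assoc, mul_assoc]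

set_option maxHeartbeats 1000000 in -- forty-eight matrix entries
/-- Both sides of each relation are brought to the normal order `f, e, k`. -/
theorem isLaxPair : IsLaxPair h S.lax S.laxSwap := by
  constructor <;> intro u v <;> ext ⟨i, i'⟩ ⟨j, j'⟩ <;>
  fin_cases i <;> fin_cases i' <;> fin_cases j <;> fin_cases j' <;>
    simp only [lax, laxSwap, Rsc, onFst_apply, onSnd_apply, mul_onFst_apply, mul_onSnd_apply,
      rMatrix_apply, rMatrixSwap_apply, mul_rMatrix_apply, mul_rMatrixSwap_apply,
      Fintype.sum_prod_type, Fin.sum_univ_two, Prod.swap_prod_mk, Prod.mk.injEq, Matrix.of_apply,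
      Matrix.cons_val', Matrix.cons_val_zero, Matrix.cons_val_one, Matrix.cons_val_fin_one,
      Fin.isValue, Fin.zero_eta, Fin.mk_one, zero_ne_one, one_ne_zero, and_true, true_and,
      and_false, false_and, and_self, reduceIte, zero_mul, zero_smul, smul_zero, add_zero,
      zero_add] <;>
    simp only [mul_sub, sub_mul, smul_mul_assoc, mul_smul_comm, smul_smul, smul_add, smul_sub,
      mul_one, one_mul, mul_assoc, S.k_mul_kInv, S.kInv_mul_k, S.k_mul_f, S.kInv_mul_e,
      S.k_mul_e_mul, S.k_mul_f_mul, S.kInv_mul_e_mul, S.kInv_mul_f_mul, S.e_mul_f] <;>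
    match_scalars <;>
    simp only [Complex.sinh, exp_add, exp_sub, exp_neg] <;> field_simp <;> ring

end UqTriple

end Lax

section ContinuousFamilies

open scoped TensorProduct

variable {P A : Type*} [TopologicalSpace P] [Ring A] [Algebra ℂ A]

variable (P A) in
/-- The family `u ↦ ∑ c_i(u) • a_i` of elements of `A` attached to a finite sum `∑ c_i ⊗ a_i`. -/
def toFamily : C(P, ℂ) ⊗[ℂ] A →ₐ[ℂ] P → A :=
  Algebra.TensorProduct.lift ((Algebra.ofId ℂ A).compLeft P |>.comp (ContinuousMap.coeFnAlgHom ℂ))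
    (Pi.constAlgHom ℂ P A)
    fun c a => Pi.commute_iff.2 fun u => Algebra.commute_algebraMap_left (c u) a

@[simp] lemma toFamily_tmul (c : C(P, ℂ)) (a : A) : toFamily P A (c ⊗ₜ a) = fun u => c u • a := by
  ext u
  rw [toFamily, Algebra.TensorProduct.lift_tmul, Algebra.smul_def]
  rfl

variable (P A) in
/-- The families of elements of `A` which are finite sums `∑ c_i(u) • a_i` with continuous
coefficients `c_i`; this replaces continuity, since `A` carries no topology. -/
def continuousFamily : Subalgebra ℂ (P → A) := (toFamily P A).range

lemma smul_const_mem_continuousFamily {c : P → ℂ} (hc : Continuous c) (a : A) :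
    (fun u => c u • a) ∈ continuousFamily P A :=
  ⟨(⟨c, hc⟩ : C(P, ℂ)) ⊗ₜ a, by simp⟩

lemma const_mem_continuousFamily (a : A) : (fun _ => a) ∈ continuousFamily P A :=
  ⟨1 ⊗ₜ a, by simp⟩

lemma smul_mem_continuousFamily {c : P → ℂ} (hc : Continuous c) {F : P → A}
    (hF : F ∈ continuousFamily P A) : (fun u => c u • F u) ∈ continuousFamily P A := by
  convert mul_mem (smul_const_mem_continuousFamily hc 1) hF using 2
  simp

lemma continuous_dual_comp {F : P → A} (hF : F ∈ continuousFamily P A) (φ : Module.Dual ℂ A) :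
    Continuous fun u => φ (F u) := by
  obtain ⟨t, rfl⟩ := hF
  induction t with
  | zero => simpa using! continuous_const
  | tmul c a => simpa using! c.continuous.mul continuous_const
  | add s t hs ht => simpa using! hs.add ht

theorem eq_of_smul_eq {F G : P → A} (hF : F ∈ continuousFamily P A)
    (hG : G ∈ continuousFamily P A) {c : P → ℂ} (hc : Dense {u | c u ≠ 0})
    (H : ∀ u, c u • F u = c u • G u) : F = G := by
  funext u
  rw [← sub_eq_zero, ← Module.forall_dual_apply_eq_zero_iff ℂ]
  intro φ
  rw [map_sub, sub_eq_zero]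
  refine congrFun (Continuous.ext_on hc (continuous_dual_comp hF φ)
    (continuous_dual_comp hG φ) fun u hu => ?_) u
  exact congrArg φ (smul_right_injective A hu (H u))

lemma dense_sinh_add_ne_zero (x : ℂ) : Dense {u : ℂ | sinh (u + x) ≠ 0} := by
  have analytic : AnalyticOnNhd ℂ (fun u => sinh (u + x)) Set.univ := fun u _ => by fun_prop
  have nonzero : sinh (Real.pi / 2 * I - x + x) ≠ 0 := by simp [sinh_mul_I]
  have eventually_ne : ∀ u, ∀ᶠ w in nhdsWithin u {u}ᶜ, sinh (w + x) ≠ 0 := fun u => by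
    simpa using! Filter.disjoint_principal_right.1 <| mem_codiscrete.1
      (analytic.preimage_zero_mem_codiscrete nonzero) u
  exact fun u => mem_closure_iff_frequently.2 <|
    (eventually_ne u).frequently.filter_mono nhdsWithin_le_nhds

end ContinuousFamilies

section CrossingSymmetry

variable {A : Type*} [Ring A] [Algebra ℂ A]

/-- The value which crossing symmetry prescribes for `sinh (2 * u - h) • K(-u)`, as a function of
the boundary matrix `K = K(u)`. -/
def crossed (h u : ℂ) (K : Matrix (Fin 2) (Fin 2) A) : Matrix (Fin 2) (Fin 2) A :=
  !![(exp (-h) * sinh (2 * u)) • K 1 1 - (sinh h * exp (-(2 * u))) • K 0 0,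
      -sinh (2 * u + h) • K 0 1;
    -sinh (2 * u + h) • K 1 0,
      (exp h * sinh (2 * u)) • K 0 0 - (sinh h * exp (2 * u)) • K 1 1]

/-- The behaviour of a boundary matrix under the reflection `u ↦ -u`. -/
def CrossingSymmetric (h : ℂ) (K : ℂ → Matrix (Fin 2) (Fin 2) A) : Prop :=
  ∀ u, sinh (2 * u - h) • K (-u) = crossed h u (K u)

lemma crossingSymmetric_one (h : ℂ) :
    CrossingSymmetric h (fun _ => (1 : Matrix (Fin 2) (Fin 2) A)) := by
  intro u
  have upper : exp (-h) * sinh (2 * u) - sinh h * exp (-(2 * u)) = sinh (2 * u - h) := by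
    simp only [sinh, exp_sub, exp_neg]
    field_simp
    ring
  have lower : exp h * sinh (2 * u) - sinh h * exp (2 * u) = sinh (2 * u - h) := by
    simp only [sinh, exp_sub, exp_neg]
    field_simp
    ring
  ext i j
  fin_cases i <;> fin_cases j <;> simp [crossed, ← sub_smul, upper, lower]

/-- The operators diagonalised on the reference state: the entry `K₀₀(u)`, and its reflection
`sinh (2 * u - h) • K₀₀(-u)`, which plays the role of `K₁₁(u)`. -/
def diagOp (h : ℂ) (K : ℂ → Matrix (Fin 2) (Fin 2) A) : Fin 2 → ℂ → A :=
  ![fun u => K u 0 0, fun u => sinh (2 * u - h) • K (-u) 0 0]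

variable {h : ℂ} {K : ℂ → Matrix (Fin 2) (Fin 2) A}

lemma CrossingSymmetric.diagOp_one (hK : CrossingSymmetric h K) (u : ℂ) :
    diagOp h K 1 u
      = (exp (-h) * sinh (2 * u)) • K u 1 1 - (sinh h * exp (-(2 * u))) • K u 0 0 :=
  congrFun (congrFun (hK u) 0) 0

lemma CrossingSymmetric.smul_apply_zero_one_neg (hK : CrossingSymmetric h K) (u : ℂ) :
    sinh (2 * u - h) • K (-u) 0 1 = -sinh (2 * u + h) • K u 0 1 :=
  congrFun (congrFun (hK u) 0) 1

lemma CrossingSymmetric.sum_transferWeight_smul_diagOp (hK : CrossingSymmetric h K) (u : ℂ) :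
    ∑ σ, transferWeight h u σ • diagOp h K σ u
      = sinh (2 * u) • (exp h • K u 0 0 + exp (-h) • K u 1 1) := by
  rw [Fin.sum_univ_two, hK.diagOp_one]
  simp only [transferWeight, diagOp, Matrix.cons_val_zero, Matrix.cons_val_one]
  match_scalars
  · simp only [sinh, exp_add, exp_neg]
    field_simp
    ring
  · ring

lemma ReflectionEquation.smul_mul_apply_zero_one (hK : ReflectionEquation h K) (u v : ℂ) :
    sinh (u + (v - h)) • sinh (u + (h - v)) • (K u 0 1 * K v 0 1)
      = sinh (u + (v - h)) • sinh (u + (h - v)) • (K v 0 1 * K u 0 1) := by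
  have entry : sinh (u + v - h) • sinh (u - v + h) • (K u 0 1 * K v 0 1)
      = sinh (u - v + h) • sinh (u + v - h) • (K v 0 1 * K u 0 1) := by
    simpa [mul_rMatrix_apply, mul_rMatrixSwap_apply, mul_onFst_apply, mul_onSnd_apply,
      onSnd_apply, rMatrix_apply, Rsc, Fintype.sum_prod_type]
      using congrFun (congrFun (hK u v) (0, 0)) (1, 1)
  rw [← add_sub_assoc u v h, show u + (h - v) = u - v + h by ring, entry, smul_comm]

lemma ReflectionEquation.smul_mul_apply_zero_zero (hK : ReflectionEquation h K) (u v : ℂ) :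
    (sinh (u - v) * sinh (u + v)) • (K u 0 0 * K v 0 1)
      = (sinh (u - v - h) * sinh (u + v - h)) • (K v 0 1 * K u 0 0)
        + (sinh (u + v - h) * (sinh h * exp (u - v))) • (K u 0 1 * K v 0 0)
        - (sinh (u - v) * (sinh h * exp (u + v - h))) • (K u 0 1 * K v 1 1) := by
  have entry : sinh (v + u - h) • sinh (v - u + h) • (K v 0 1 * K u 0 0)
      = (sinh h * exp (u - v)) • sinh (v + u - h) • (K u 0 1 * K v 0 0)
        + (sinh (v - u) • sinh (v + u) • (K u 0 0 * K v 0 1)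
          + sinh (v - u) • (sinh h * exp (v + u - h)) • (K u 0 1 * K v 1 1)) := by
    simpa [mul_rMatrix_apply, mul_rMatrixSwap_apply, mul_onFst_apply, mul_onSnd_apply,
      onSnd_apply, rMatrix_apply, Rsc, Fintype.sum_prod_type]
      using congrFun (congrFun (hK v u) (0, 0)) (1, 0)
  rw [add_comm v u, show v - u + h = -(u - v - h) by ring, ← neg_sub u v, sinh_neg,
    sinh_neg] at entry
  linear_combination (norm := module) entry

theorem ReflectionEquation.commute_apply_zero_one (hK : ReflectionEquation h K)
    (hcont : (fun u => K u 0 1) ∈ continuousFamily ℂ A) (u v : ℂ) :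
    Commute (K u 0 1) (K v 0 1) := by
  have const := const_mem_continuousFamily (P := ℂ) (K v 0 1)
  have hsinh : Continuous fun u => sinh (u + (h - v)) := by fun_prop
  have without_first_factor :=
    eq_of_smul_eq (smul_mem_continuousFamily hsinh (mul_mem hcont const))
      (smul_mem_continuousFamily hsinh (mul_mem const hcont)) (dense_sinh_add_ne_zero (v - h))
      fun u => hK.smul_mul_apply_zero_one u v
  exact congrFun (eq_of_smul_eq (mul_mem hcont const) (mul_mem const hcont)
    (dense_sinh_add_ne_zero (h - v)) (congrFun without_first_factor)) u

lemma IsGeneric.neg {u v : ℂ} (H : IsGeneric u v) : IsGeneric (-u) v :=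
  ⟨H.1, by simpa [refl] using H.sinh_refl_sub_refl_ne_zero 1 0,
    by simpa [refl] using H.sinh_refl_sub_refl_ne_zero 1 1⟩

lemma diagOp_zero_mul_apply_zero_one (hK : ReflectionEquation h K)
    (hcross : CrossingSymmetric h K) {u v : ℂ} (huv : IsGeneric u v) :
    diagOp h K 0 u * K v 0 1 = keepCoeff h 0 u v • (K v 0 1 * diagOp h K 0 u)
      + ∑ τ, swapCoeff h 0 τ u v • (K u 0 1 * diagOp h K τ v) := by
  obtain ⟨hv, hsub, hadd⟩ := huv
  have trig : sinh (u + v - h) * sinh (2 * v)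
      = sinh (u + v) * sinh (2 * v - h) + sinh h * sinh (u - v) := by
    rw [show u - v = u + v - 2 * v by ring]
    simp only [sinh_sub]
    ring
  have hexp : exp (u + v) * exp (-(2 * v)) = exp (u - v) := by rw [← exp_add]; ring_nf
  have hexp_sub : exp (u + v - h) = exp (u + v) * exp (-h) := by rw [← exp_add, sub_eq_add_neg]
  apply smul_right_injective A (mul_ne_zero hsub hadd)
  simp only [Fin.sum_univ_two, hcross.diagOp_one]
  refine (hK.smul_mul_apply_zero_zero u v).trans ?_
  simp only [diagOp, keepCoeff, scatter, swapCoeff, leftWeight, rightWeight, expKernel, refl,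
    Matrix.cons_val_zero, Matrix.cons_val_one, sub_neg_eq_add, mul_sub, mul_smul_comm, hexp_sub]
  generalize sinh (2 * v) = d, sinh (2 * v - h) = d', exp (-(2 * v)) = e at *
  match_scalars
  · field_simp
  · field_simp
    linear_combination sinh h * exp (u - v) * trig - sinh h ^ 2 * sinh (u - v) * hexp
  · field_simp

theorem diagOp_mul_apply_zero_one (hK : ReflectionEquation h K) (hcross : CrossingSymmetric h K)
    (σ : Fin 2) {u v : ℂ} (huv : IsGeneric u v) :
    diagOp h K σ u * K v 0 1 = keepCoeff h σ u v • (K v 0 1 * diagOp h K σ u)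
      + ∑ τ, swapCoeff h σ τ u v • (K u 0 1 * diagOp h K τ v) := by
  fin_cases σ
  · exact diagOp_zero_mul_apply_zero_one hK hcross huv
  have reflected := diagOp_zero_mul_apply_zero_one hK hcross huv.neg
  calc diagOp h K 1 u * K v 0 1
      = sinh (2 * u - h) • (diagOp h K 0 (-u) * K v 0 1) := smul_mul_assoc _ _ _
    _ = _ := by
      rw [reflected, smul_add, Finset.smul_sum]
      congr 1
      · rw [smul_comm, ← mul_smul_comm]
        rfl
      refine Finset.sum_congr rfl fun τ _ => ?_
      rw [smul_comm, ← smul_mul_assoc, hcross.smul_apply_zero_one_neg, smul_mul_assoc, smul_smul]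
      congr 1
      simp only [swapCoeff, leftWeight, refl, mul_neg, mul_one, neg_neg, neg_mul, neg_inj,
        Fin.isValue, Fin.mk_one, Matrix.cons_val_zero, Matrix.cons_val_one,
        Matrix.cons_val_fin_one]
      ring

end CrossingSymmetry

section Dressing

variable {h : ℂ} {A : Type*} [Ring A] [Algebra ℂ A]

lemma IsLaxPair.shift {L L' : ℂ → Matrix (Fin 2) (Fin 2) A} (H : IsLaxPair h L L') (ζ : ℂ) :
    IsLaxPair h (fun u => L (u - ζ)) (fun u => L' (u + ζ)) where
  left_left u v := by simpa using H.left_left (u - ζ) (v - ζ)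
  right_left u v := by simpa [add_add_sub_cancel] using H.right_left (u + ζ) (v - ζ)
  right_right u v := by simpa using H.right_right (u + ζ) (v + ζ)

namespace UqTriple

variable (S : UqTriple h A)

/-- The image of `U_q(sl₂)`. -/
def range : Subalgebra ℂ A := Algebra.adjoin ℂ {S.k, S.kInv, S.e, S.f}

/-- The elements commuting with the image of `U_q(sl₂)`. -/
def commutant : Subalgebra ℂ A := Subalgebra.centralizer ℂ S.range

lemma k_mem_range : S.k ∈ S.range := Algebra.subset_adjoin (by simp)

lemma kInv_mem_range : S.kInv ∈ S.range := Algebra.subset_adjoin (by simp)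

lemma e_mem_range : S.e ∈ S.range := Algebra.subset_adjoin (by simp)

lemma f_mem_range : S.f ∈ S.range := Algebra.subset_adjoin (by simp)

lemma lax_mem_range (w : ℂ) (i j : Fin 2) : S.lax w i j ∈ S.range := by
  have hk := S.k_mem_range
  have hkInv := S.kInv_mem_range
  fin_cases i <;> fin_cases j
  · exact sub_mem (S.range.smul_mem hk _) (S.range.smul_mem hkInv _)
  · exact S.range.smul_mem (mul_mem hk S.f_mem_range) _
  · exact S.range.smul_mem (mul_mem S.e_mem_range hkInv) _
  · exact sub_mem (S.range.smul_mem hkInv _) (S.range.smul_mem hk _)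

lemma laxSwap_mem_range (w : ℂ) (i j : Fin 2) : S.laxSwap w i j ∈ S.range := by
  have hk := S.k_mem_range
  have hkInv := S.kInv_mem_range
  fin_cases i <;> fin_cases j
  · exact sub_mem (S.range.smul_mem hk _) (S.range.smul_mem hkInv _)
  · exact S.range.smul_mem (mul_mem S.f_mem_range hk) _
  · exact S.range.smul_mem (mul_mem hkInv S.e_mem_range) _
  · exact sub_mem (S.range.smul_mem hkInv _) (S.range.smul_mem hk _)

/-- Dressing of a boundary matrix by the double row of Lax matrices with inhomogeneity `ζ`. -/
def dress (ζ : ℂ) (K : ℂ → Matrix (Fin 2) (Fin 2) A) (u : ℂ) : Matrix (Fin 2) (Fin 2) A :=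
  S.lax (u - ζ) * K u * S.laxSwap (u + ζ)

variable {S}

set_option maxHeartbeats 1000000 in -- thirty-two normally ordered products
theorem lax_mul_crossed_mul_laxSwap {M : Matrix (Fin 2) (Fin 2) A}
    (hM : ∀ i j, M i j ∈ S.commutant) (u ζ : ℂ) :
    S.lax (-u - ζ) * crossed h u M * S.laxSwap (-u + ζ)
      = crossed h u (S.lax (u - ζ) * M * S.laxSwap (u + ζ)) := by
  have hgen : ∀ g ∈ S.range, ∀ i j, g * M i j = M i j * g := fun g hg i j =>
    (Subalgebra.mem_centralizer_iff ℂ).1 (hM i j) g hg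
  have hk := hgen _ S.k_mem_range
  have hkInv := hgen _ S.kInv_mem_range
  have he := hgen _ S.e_mem_range
  have hf := hgen _ S.f_mem_range
  have move_mul : ∀ {g}, (∀ i j, g * M i j = M i j * g) →
      ∀ i j y, g * (M i j * y) = M i j * (g * y) := fun H i j y => by
    rw [← mul_assoc, H, mul_assoc]
  ext i j
  fin_cases i <;> fin_cases j <;>
    simp only [lax, laxSwap, crossed, Matrix.mul_apply, Fin.sum_univ_two, Matrix.of_apply,
      Matrix.cons_val', Matrix.cons_val_zero, Matrix.cons_val_one, Matrix.cons_val_fin_one,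
      Fin.isValue, Fin.zero_eta, Fin.mk_one] <;>
    simp only [mul_sub, sub_mul, add_mul, smul_mul_assoc, mul_smul_comm, smul_smul, smul_add,
      smul_sub, mul_assoc, move_mul hk, move_mul he, hk, hkInv, hf] <;>
    simp only [mul_add, mul_sub, mul_smul_comm, smul_smul, smul_add, smul_sub, mul_one,
      S.k_mul_kInv, S.kInv_mul_k, S.kInv_mul_e, S.k_mul_e_mul, S.k_mul_f_mul, S.kInv_mul_e_mul,
      S.kInv_mul_f_mul, S.e_mul_f] <;>
    match_scalars <;>
    simp only [Complex.sinh, two_mul, neg_add, exp_add, exp_sub, exp_neg] <;> field_simp <;> ring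

variable {K : ℂ → Matrix (Fin 2) (Fin 2) A} (hKS : ∀ u i j, K u i j ∈ S.commutant) (ζ : ℂ)

include hKS

theorem reflectionEquation_dress (hK : ReflectionEquation h K) :
    ReflectionEquation h (S.dress ζ K) :=
  hK.dress (S.isLaxPair.shift ζ)
    (fun u v i j k l => hKS v k l _ (S.lax_mem_range (u - ζ) i j))
    fun u v i j k l => hKS v k l _ (S.laxSwap_mem_range (u + ζ) i j)

theorem crossingSymmetric_dress (hK : CrossingSymmetric h K) :
    CrossingSymmetric h (S.dress ζ K) := by
  intro u
  rw [dress, dress, ← lax_mul_crossed_mul_laxSwap (hKS u), ← hK u, mul_smul_comm, smul_mul_assoc]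

end UqTriple

end Dressing

section HighestWeight

variable {h : ℂ} {V : Type*} [AddCommGroup V] [Module ℂ V] {Ω : V}

/-- A boundary matrix solving the reflection equation for which `Ω` is a reference state of the
algebraic Bethe ansatz, on which `K₀₀(u)` has the eigenvalue `a(u)`. -/
structure IsHighestWeight (h : ℂ) (Ω : V) (a : ℂ → ℂ)
    (K : ℂ → Matrix (Fin 2) (Fin 2) (Module.End ℂ V)) : Prop where
  reflectionEquation : ReflectionEquation h K
  crossingSymmetric : CrossingSymmetric h K
  mem_continuousFamily : ∀ i j, (fun u => K u i j) ∈ continuousFamily ℂ (Module.End ℂ V)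
  apply_zero_zero : ∀ u, K u 0 0 Ω = a u • Ω
  apply_one_zero : ∀ u, K u 1 0 Ω = 0

lemma isHighestWeight_one (h : ℂ) (Ω : V) : IsHighestWeight h Ω (fun _ => 1) (fun _ => 1) where
  reflectionEquation := reflectionEquation_one h
  crossingSymmetric := crossingSymmetric_one h
  mem_continuousFamily _ _ := const_mem_continuousFamily _
  apply_zero_zero _ := by simp
  apply_one_zero _ := by simp

namespace UqTriple

lemma lax_mem_continuousFamily {A : Type*} [Ring A] [Algebra ℂ A] (S : UqTriple h A) (ζ : ℂ)
    (i j : Fin 2) : (fun u => S.lax (u - ζ) i j) ∈ continuousFamily ℂ A := by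
  fin_cases i <;> fin_cases j
  · exact sub_mem (smul_const_mem_continuousFamily (by fun_prop) _)
      (smul_const_mem_continuousFamily (by fun_prop) _)
  · exact smul_const_mem_continuousFamily (by fun_prop) _
  · exact smul_const_mem_continuousFamily (by fun_prop) _
  · exact sub_mem (smul_const_mem_continuousFamily (by fun_prop) _)
      (smul_const_mem_continuousFamily (by fun_prop) _)

lemma laxSwap_mem_continuousFamily {A : Type*} [Ring A] [Algebra ℂ A] (S : UqTriple h A) (ζ : ℂ)
    (i j : Fin 2) : (fun u => S.laxSwap (u + ζ) i j) ∈ continuousFamily ℂ A := by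
  fin_cases i <;> fin_cases j
  · exact sub_mem (smul_const_mem_continuousFamily (by fun_prop) _)
      (smul_const_mem_continuousFamily (by fun_prop) _)
  · exact smul_const_mem_continuousFamily (by fun_prop) _
  · exact smul_const_mem_continuousFamily (by fun_prop) _
  · exact sub_mem (smul_const_mem_continuousFamily (by fun_prop) _)
      (smul_const_mem_continuousFamily (by fun_prop) _)

variable {S : UqTriple h (Module.End ℂ V)} {η : ℂ} {a : ℂ → ℂ}
  {K : ℂ → Matrix (Fin 2) (Fin 2) (Module.End ℂ V)}

lemma kInv_apply (hk : S.k Ω = exp η • Ω) : S.kInv Ω = exp (-η) • Ω := by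
  have inv : S.kInv (S.k Ω) = Ω := by
    rw [← Module.End.mul_apply, S.kInv_mul_k, Module.End.one_apply]
  rw [hk, map_smul] at inv
  rw [exp_neg, eq_inv_smul_iff₀ (exp_ne_zero η), inv]

lemma lax_zero_zero_apply (hk : S.k Ω = exp η • Ω) (w : ℂ) :
    S.lax w 0 0 Ω = sinh (w + η) • Ω := by
  simp only [lax, Matrix.of_apply, Matrix.cons_val_zero, Matrix.cons_val', Matrix.cons_val_fin_one,
    LinearMap.sub_apply, LinearMap.smul_apply, hk, kInv_apply hk, smul_smul, ← sub_smul]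
  rw [sinh, neg_add, exp_add, exp_add]
  ring_nf

lemma lax_one_zero_apply (hk : S.k Ω = exp η • Ω) (he : S.e Ω = 0) (w : ℂ) :
    S.lax w 1 0 Ω = 0 := by
  simp [lax, kInv_apply hk, he]

lemma laxSwap_one_zero_apply (he : S.e Ω = 0) (w : ℂ) : S.laxSwap w 1 0 Ω = 0 := by
  simp [laxSwap, he]

end UqTriple

theorem IsHighestWeight.dress {S : UqTriple h (Module.End ℂ V)} {η : ℂ} {a : ℂ → ℂ}
    {K : ℂ → Matrix (Fin 2) (Fin 2) (Module.End ℂ V)} (hK : IsHighestWeight h Ω a K)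
    (hKS : ∀ u i j, K u i j ∈ S.commutant) (hk : S.k Ω = exp η • Ω) (he : S.e Ω = 0) (ζ : ℂ) :
    IsHighestWeight h Ω (fun u => sinh (u + η - ζ) * sinh (u + η + ζ) * a u) (S.dress ζ K) where
  reflectionEquation := S.reflectionEquation_dress hKS ζ hK.reflectionEquation
  crossingSymmetric := S.crossingSymmetric_dress hKS ζ hK.crossingSymmetric
  mem_continuousFamily i j := by
    have entry : (fun u => S.dress ζ K u i j) = ∑ k, (∑ l, (fun u => S.lax (u - ζ) i l) *
        fun u => K u l k) * fun u => S.laxSwap (u + ζ) k j := by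
      ext1 u
      simp [UqTriple.dress, Matrix.mul_apply]
    rw [entry]
    exact sum_mem fun k _ => mul_mem (sum_mem fun l _ => mul_mem (S.lax_mem_continuousFamily ζ i l)
      (hK.mem_continuousFamily l k)) (S.laxSwap_mem_continuousFamily ζ k j)
  apply_zero_zero u := by
    have diag : S.laxSwap (u + ζ) 0 0 Ω = sinh (u + ζ + η) • Ω := S.lax_zero_zero_apply hk (u + ζ)
    simp only [UqTriple.dress, Matrix.mul_apply, Fin.sum_univ_two, LinearMap.add_apply,
      Module.End.mul_apply, diag, map_smul, hK.apply_zero_zero, S.lax_zero_zero_apply hk, smul_smul,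
      hK.apply_one_zero, map_zero, add_zero, S.laxSwap_one_zero_apply he]
    ring_nf
  apply_one_zero u := by
    have diag : S.laxSwap (u + ζ) 0 0 Ω = sinh (u + ζ + η) • Ω := S.lax_zero_zero_apply hk (u + ζ)
    simp [UqTriple.dress, Matrix.mul_apply, Fin.sum_univ_two, S.laxSwap_one_zero_apply he, diag,
      hK.apply_zero_zero, hK.apply_one_zero, S.lax_one_zero_apply hk he]

section DoubleRow

variable {ι A : Type*} [Ring A] [Algebra ℂ A]

/-- The double-row monodromy of the chain whose factors `i ∈ l`, with inhomogeneities `ζ i`, are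
listed from the inside out. -/
def doubleRow (S : ι → UqTriple h A) (ζ : ι → ℂ) (l : List ι) (u : ℂ) :
    Matrix (Fin 2) (Fin 2) A :=
  (l.reverse.map fun i => (S i).lax (u - ζ i)).prod * (l.map fun i => (S i).laxSwap (u + ζ i)).prod

variable {S : ι → UqTriple h A} {ζ : ι → ℂ}

lemma doubleRow_nil : doubleRow S ζ [] = fun _ => 1 := by
  ext1 u
  simp [doubleRow]

lemma doubleRow_concat (l : List ι) (i : ι) :
    doubleRow S ζ (l ++ [i]) = (S i).dress (ζ i) (doubleRow S ζ l) := by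
  ext1 u
  simp [doubleRow, UqTriple.dress, mul_assoc]

lemma doubleRow_mem {T : Subalgebra ℂ A} {l : List ι} (hT : ∀ i ∈ l, (S i).range ≤ T) (u : ℂ)
    (p q : Fin 2) : doubleRow S ζ l u p q ∈ T := by
  induction l using List.reverseRecOn generalizing p q with
  | nil =>
    simp only [doubleRow_nil, Matrix.one_apply]
    split_ifs
    exacts [one_mem T, zero_mem T]
  | append_singleton l i ih =>
    rw [doubleRow_concat, UqTriple.dress, Matrix.mul_apply]
    simp only [Matrix.mul_apply]
    have hi : (S i).range ≤ T := hT i (by simp)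
    exact sum_mem fun k _ => mul_mem
      (sum_mem fun j _ => mul_mem (hi ((S i).lax_mem_range _ _ _))
        (ih (fun i' hi' => hT i' (by simp [hi'])) _ _)) (hi ((S i).laxSwap_mem_range _ _ _))

end DoubleRow

theorem isHighestWeight_doubleRow {ι : Type*} {S : ι → UqTriple h (Module.End ℂ V)} {η : ι → ℂ}
    (hS : Pairwise fun i j => (S i).range ≤ (S j).commutant)
    (hk : ∀ i, (S i).k Ω = exp (η i) • Ω) (he : ∀ i, (S i).e Ω = 0) (ζ : ι → ℂ) {l : List ι}
    (hl : l.Nodup) :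
    IsHighestWeight h Ω
      (fun u => (l.map fun i => sinh (u + η i - ζ i) * sinh (u + η i + ζ i)).prod)
      (doubleRow S ζ l) := by
  induction l using List.reverseRecOn with
  | nil => simpa [doubleRow_nil] using isHighestWeight_one h Ω
  | append_singleton l i ih =>
    rw [List.nodup_append_comm, List.singleton_append, List.nodup_cons] at hl
    have inner_mem u p q : doubleRow S ζ l u p q ∈ (S i).commutant :=
      doubleRow_mem (fun j hj => hS fun hji => hl.1 (by rwa [← hji])) u p q
    rw [doubleRow_concat]
    simpa [mul_comm] using (ih hl.2).dress inner_mem (hk i) (he i) (ζ i)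

variable {ι : Type*} [DecidableEq ι] {a : ℂ → ℂ}
  {K : ℂ → Matrix (Fin 2) (Fin 2) (Module.End ℂ V)}

lemma IsHighestWeight.commute_apply_zero_one (hK : IsHighestWeight h Ω a K) (u v : ℂ) :
    Commute (K u 0 1) (K v 0 1) :=
  hK.reflectionEquation.commute_apply_zero_one (hK.mem_continuousFamily 0 1) u v

lemma IsHighestWeight.diagOp_apply (hK : IsHighestWeight h Ω a K) (σ : Fin 2) (u : ℂ) :
    diagOp h K σ u Ω = vacuumEigenvalue h a σ u • Ω := by
  fin_cases σ
  · exact hK.apply_zero_zero u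
  · simp [diagOp, vacuumEigenvalue, hK.apply_zero_zero, smul_smul]

theorem IsHighestWeight.smul_transfer_apply_offShellVec (hK : IsHighestWeight h Ω a K) {v : ι → ℂ}
    {s : Finset ι} (hs : (s : Set ι).Pairwise fun i j => IsGeneric (v i) (v j))
    (hbae : ∀ m ∈ s,
      dressedVacuum h a v (s.erase m) (v m) = dressedVacuum h a v (s.erase m) (-v m))
    {u : ℂ} (hu : ∀ i ∈ s, IsGeneric u (v i)) :
    sinh (2 * u) • (exp h • K u 0 0 + exp (-h) • K u 1 1)
        (offShellVec (fun x => K x 0 1) Ω v hK.commute_apply_zero_one s)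
      = (sinh (2 * u + h) * dressedVacuum h a v s u + sinh (2 * u - h) * dressedVacuum h a v s (-u))
        • offShellVec (fun x => K x 0 1) Ω v hK.commute_apply_zero_one s := by
  rw [← sum_transferWeight_smul_apply_offShellVec hK.commute_apply_zero_one
      (fun σ _ _ => diagOp_mul_apply_zero_one hK.reflectionEquation hK.crossingSymmetric σ)
      hK.diagOp_apply hs hbae hu, ← LinearMap.smul_apply,
    ← hK.crossingSymmetric.sum_transferWeight_smul_diagOp]
  simp

end HighestWeight

section Coordinates

/-- A coordinate with values in `α` on a set `ι` of basis labels: it exhibits the space `ι →₀ ℂ` as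
having a tensor factor `α →₀ ℂ`. -/
structure Coordinate (ι α : Type*) where
  get : ι → α
  set : ι → α → ι
  get_set : ∀ i a, get (set i a) = a
  set_set : ∀ i a b, set (set i a) b = set i b
  set_get : ∀ i, set i (get i) = i

namespace Coordinate

variable {ι α β : Type*} (F : Coordinate ι α)

/-- The linear map underlying `Coordinate.localOp`. -/
def localMap (T : Module.End ℂ (α →₀ ℂ)) : Module.End ℂ (ι →₀ ℂ) :=
  Finsupp.linearCombination ℂ fun i =>
    Finsupp.mapDomain (F.set i) (T (Finsupp.single (F.get i) 1))

lemma localMap_single (T : Module.End ℂ (α →₀ ℂ)) (i : ι) :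
    F.localMap T (Finsupp.single i 1)
      = Finsupp.mapDomain (F.set i) (T (Finsupp.single (F.get i) 1)) := by
  rw [localMap, Finsupp.linearCombination_single, one_smul]

lemma localMap_mapDomain (T : Module.End ℂ (α →₀ ℂ)) (i : ι) (x : α →₀ ℂ) :
    F.localMap T (Finsupp.mapDomain (F.set i) x) = Finsupp.mapDomain (F.set i) (T x) := by
  have on_basis : F.localMap T ∘ₗ Finsupp.lmapDomain ℂ ℂ (F.set i)
      = Finsupp.lmapDomain ℂ ℂ (F.set i) ∘ₗ T := by
    ext a : 2
    simp [localMap_single, F.get_set, funext (F.set_set i a)]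
  exact LinearMap.congr_fun on_basis x

/-- The operators on the tensor factor `α →₀ ℂ` of `ι →₀ ℂ`. -/
def localOp : Module.End ℂ (α →₀ ℂ) →ₐ[ℂ] Module.End ℂ (ι →₀ ℂ) :=
  AlgHom.ofLinearMap
    { toFun := F.localMap
      map_add' := fun S T => by
        ext i : 2
        simp [localMap_single, Finsupp.mapDomain_add]
      map_smul' := fun c T => by
        ext i : 2
        simp [localMap_single, Finsupp.mapDomain_smul] }
    (by ext i : 2; simp [localMap_single, F.set_get])
    fun S T => by ext i : 2; simp [localMap_single, localMap_mapDomain]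

lemma localOp_single (T : Module.End ℂ (α →₀ ℂ)) (i : ι) :
    F.localOp T (Finsupp.single i 1)
      = Finsupp.mapDomain (F.set i) (T (Finsupp.single (F.get i) 1)) :=
  F.localMap_single T i

lemma localOp_single_of_eigenvector {T : Module.End ℂ (α →₀ ℂ)} {i : ι} {c : ℂ}
    (hT : T (Finsupp.single (F.get i) 1) = c • Finsupp.single (F.get i) 1) :
    F.localOp T (Finsupp.single i 1) = c • Finsupp.single i 1 := by
  rw [localOp_single, hT, Finsupp.mapDomain_smul, Finsupp.mapDomain_single, F.set_get]

/-- Two coordinates which can be changed independently of each other. -/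
def Independent (F : Coordinate ι α) (G : Coordinate ι β) : Prop :=
  ∀ i a b, F.set (G.set i b) a = G.set (F.set i a) b

variable {F} {G : Coordinate ι β}

lemma Independent.symm (H : F.Independent G) : G.Independent F := fun i b a => (H i a b).symm

lemma Independent.get_set (H : F.Independent G) (i : ι) (b : β) : F.get (G.set i b) = F.get i := by
  conv_lhs => rw [← F.set_get i, ← H, F.get_set]

lemma Independent.localOp_localOp_single (H : F.Independent G) (S : Module.End ℂ (α →₀ ℂ))
    (T : Module.End ℂ (β →₀ ℂ)) (i : ι) :
    F.localOp S (G.localOp T (Finsupp.single i 1))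
      = (T (Finsupp.single (G.get i) 1)).sum fun b t =>
          (S (Finsupp.single (F.get i) 1)).sum fun a s =>
            Finsupp.single (F.set (G.set i b) a) (t * s) := by
  rw [localOp_single, Finsupp.mapDomain, map_finsuppSum]
  refine Finsupp.sum_congr fun b _ => ?_
  rw [← Finsupp.smul_single_one, map_smul, localOp_single, H.get_set, Finsupp.mapDomain,
    Finsupp.smul_sum]
  simp

theorem Independent.commute_localOp (H : F.Independent G) (S : Module.End ℂ (α →₀ ℂ))
    (T : Module.End ℂ (β →₀ ℂ)) : Commute (F.localOp S) (G.localOp T) := by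
  refine Finsupp.lhom_ext' fun i => LinearMap.ext_ring ?_
  simp only [LinearMap.comp_apply, Finsupp.lsingle_apply, Module.End.mul_apply]
  rw [H.localOp_localOp_single, H.symm.localOp_localOp_single, Finsupp.sum_comm]
  simp only [H _ _ _, mul_comm]

end Coordinate

end Coordinates

section Representations

variable {h : ℂ}

namespace UqTriple

variable {A B C : Type*} [Ring A] [Algebra ℂ A] [Ring B] [Algebra ℂ B] [Ring C] [Algebra ℂ C]

/-- The representation obtained by composition with an algebra homomorphism. -/
def map (S : UqTriple h B) (φ : B →ₐ[ℂ] A) : UqTriple h A where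
  k := φ S.k
  kInv := φ S.kInv
  e := φ S.e
  f := φ S.f
  k_mul_kInv := by rw [← map_mul, S.k_mul_kInv, map_one]
  kInv_mul_k := by rw [← map_mul, S.kInv_mul_k, map_one]
  k_mul_e := by rw [← map_mul, S.k_mul_e, map_smul, map_mul]
  k_mul_f := by rw [← map_mul, S.k_mul_f, map_smul, map_mul]
  e_mul_f := by simp only [← map_mul, ← map_sub, ← map_smul, ← map_add, S.e_mul_f]

lemma map_lax (S : UqTriple h B) (φ : B →ₐ[ℂ] A) (w : ℂ) : (S.map φ).lax w = (S.lax w).map φ := by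
  ext i j
  fin_cases i <;> fin_cases j <;> simp [lax, map]

lemma map_laxSwap (S : UqTriple h B) (φ : B →ₐ[ℂ] A) (w : ℂ) :
    (S.map φ).laxSwap w = (S.laxSwap w).map φ := by
  ext i j
  fin_cases i <;> fin_cases j <;> simp [laxSwap, map]

lemma map_range_le_commutant (S : UqTriple h B) (S' : UqTriple h C) {φ : B →ₐ[ℂ] A}
    {ψ : C →ₐ[ℂ] A} (H : ∀ x y, Commute (φ x) (ψ y)) :
    (S.map φ).range ≤ (S'.map ψ).commutant := by
  have range_le (R : UqTriple h C) : (R.map ψ).range ≤ ψ.range :=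
    Algebra.adjoin_le (by rintro _ (rfl | rfl | rfl | rfl) <;> exact ⟨_, rfl⟩)
  refine Algebra.adjoin_le ?_
  rintro _ (rfl | rfl | rfl | rfl) <;>
    refine (Subalgebra.mem_centralizer_iff ℂ).2 fun y hy => ?_ <;>
    obtain ⟨y, rfl⟩ := range_le S' hy <;> exact (H _ y).symm

end UqTriple

/-- The spin-1/2 representation. -/
def spinTriple (h : ℂ) : UqTriple h (Matrix (Fin 2) (Fin 2) ℂ) where
  k := !![exp (h / 2), 0; 0, exp (-(h / 2))]
  kInv := !![exp (-(h / 2)), 0; 0, exp (h / 2)]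
  e := !![0, sinh h; 0, 0]
  f := !![0, 0; 1, 0]
  k_mul_kInv := by simp [← exp_add, Matrix.one_fin_two]
  kInv_mul_k := by simp [← exp_add, Matrix.one_fin_two]
  k_mul_e := by
    have : exp (h / 2) = exp h * exp (-(h / 2)) := by rw [← exp_add]; ring_nf
    simp [this, mul_left_comm, mul_comm]
  k_mul_f := by
    have : exp (-(h / 2)) = (exp h)⁻¹ * exp (h / 2) := by rw [← exp_neg, ← exp_add]; ring_nf
    simp [this]
  e_mul_f := by
    have sinh_eq :
        sinh h = 2⁻¹ * (exp (h / 2) * exp (h / 2) - exp (-(h / 2)) * exp (-(h / 2))) := by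
      rw [← exp_add, ← exp_add, sinh]; ring_nf
    ext i j
    fin_cases i <;> fin_cases j <;> simp [sinh_eq, mul_sub]

lemma sinh_mul_qnum (hs : sinh h ≠ 0) (x : ℂ) : sinh h * qnum h x = sinh (h * x) := by
  have two_mul_sinh (y : ℂ) : exp y - exp (-y) = 2 * sinh y := by rw [sinh]; ring
  rw [qnum, two_mul_sinh, two_mul_sinh]
  field_simp

/-- The relation `[E, F] = [H]_q` on the basis vector `|x⟩` of the Verma module. -/
lemma qnum_mul_qnum_sub (hs : sinh h ≠ 0) (α x : ℂ) :
    sinh h * (qnum h (x + 1) * qnum h (α - (x + 1)) - qnum h x * qnum h (α - x))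
      = sinh (h * (α - 1 - 2 * x)) := by
  refine mul_left_cancel₀ hs ?_
  calc sinh h * (sinh h * (qnum h (x + 1) * qnum h (α - (x + 1)) - qnum h x * qnum h (α - x)))
      = sinh h * qnum h (x + 1) * (sinh h * qnum h (α - (x + 1)))
          - sinh h * qnum h x * (sinh h * qnum h (α - x)) := by ring
    _ = sinh (h * x + h) * sinh (h * α - (h * x + h)) - sinh (h * x) * sinh (h * α - h * x) := by
        simp only [sinh_mul_qnum hs, mul_add, mul_sub, mul_one]
    _ = sinh h * sinh (h * α - h - (h * x + h * x)) := by
        simp only [sinh, exp_add, exp_sub, exp_neg, neg_sub]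
        field_simp
        ring
    _ = sinh h * sinh (h * (α - 1 - 2 * x)) := by ring_nf

lemma gE_succ (α : ℂ) (n : ℕ) :
    gE h α (n + 1) = (qnum h (n + 1) * qnum h (α - (n + 1))) • Finsupp.single n 1 := by
  simp [gE]

lemma linearCombination_gF_gE (α : ℂ) (n : ℕ) :
    Finsupp.linearCombination ℂ gF (gE h α n)
      = (qnum h n * qnum h (α - n)) • Finsupp.single n 1 := by
  rcases n with _ | n
  · simp [gE, qnum]
  · rw [gE_succ, map_smul, Finsupp.linearCombination_single, one_smul, gF, Nat.cast_succ]

/-- The Verma module of highest weight `α - 1`. -/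
def vermaTriple (hs : sinh h ≠ 0) (α : ℂ) : UqTriple h (Module.End ℂ (ℕ →₀ ℂ)) where
  k := Finsupp.linearCombination ℂ (gExp α 0 (h / 2))
  kInv := Finsupp.linearCombination ℂ (gExp α 0 (-(h / 2)))
  e := sinh h • Finsupp.linearCombination ℂ (gE h α)
  f := Finsupp.linearCombination ℂ gF
  k_mul_kInv := by
    ext n : 2
    simp [gExp, ← exp_add]
  kInv_mul_k := by
    ext n : 2
    simp [gExp, ← exp_add]
  k_mul_e := by
    ext n : 2
    rcases n with _ | n
    · simp [gExp, gE]
    · have shift : exp (h / 2 * (α - 1 - 2 * n))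
          = exp h * exp (h / 2 * (α - 1 - 2 * ↑(n + 1))) := by
        rw [← exp_add]; push_cast; ring_nf
      simp only [Algebra.mul_smul_comm, Algebra.smul_mul_assoc, LinearMap.comp_apply,
        LinearMap.smul_apply, Module.End.mul_apply, map_smul, Finsupp.lsingle_apply,
        Finsupp.linearCombination_single, gE_succ, gExp, zero_add, shift]
      module
  k_mul_f := by
    ext n : 2
    have shift : exp (h / 2 * (α - 1 - 2 * (n + 1)))
        = (exp h)⁻¹ * exp (h / 2 * (α - 1 - 2 * n)) := by
      rw [← exp_neg, ← exp_add]; ring_nf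
    simp [gExp, gF, shift]
  e_mul_f := by
    ext n : 2
    have ef : Finsupp.linearCombination ℂ (gE h α) (gF n) = gE h α (n + 1) := by simp [gF]
    have weight : sinh (h * (α - 1 - 2 * n))
        = 2⁻¹ * (exp (h / 2 * (α - 1 - 2 * n)) * exp (h / 2 * (α - 1 - 2 * n))
            - exp (-(h / 2) * (α - 1 - 2 * n)) * exp (-(h / 2) * (α - 1 - 2 * n))) := by
      rw [← exp_add, ← exp_add, sinh]; ring_nf
    have commutator := (qnum_mul_qnum_sub hs α n).trans weight
    simp only [Algebra.smul_mul_assoc, Algebra.mul_smul_comm, LinearMap.comp_apply,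
      LinearMap.smul_apply, LinearMap.add_apply, LinearMap.sub_apply, Module.End.mul_apply,
      map_smul, Finsupp.lsingle_apply, Finsupp.linearCombination_single, ef, gE_succ,
      linearCombination_gF_gE, gExp, zero_add]
    linear_combination (norm := module) congrArg (· • Finsupp.single n (1 : ℂ)) commutator

end Representations

section TensorFactors

variable {N : ℕ}

/-- The coordinate of the basis labels of `H2b N` which belongs to the left Verma module. -/
def leftCoordinate : Coordinate (ℕ × Conf N × ℕ) ℕ where
  get p := p.1
  set p n := (n, p.2)
  get_set _ _ := rfl
  set_set _ _ _ := rfl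
  set_get _ := rfl

/-- The coordinate of the basis labels of `H2b N` which belongs to the spin `j`. -/
def siteCoordinate (j : Fin N) : Coordinate (ℕ × Conf N × ℕ) (Fin 2) where
  get p := p.2.1 j
  set p s := (p.1, Function.update p.2.1 j s, p.2.2)
  get_set _ _ := Function.update_self ..
  set_set _ _ _ := by simp only [Function.update_idem]
  set_get _ := by simp only [Function.update_eq_self]

/-- The coordinate of the basis labels of `H2b N` which belongs to the right Verma module. -/
def rightCoordinate : Coordinate (ℕ × Conf N × ℕ) ℕ where
  get p := p.2.2
  set p m := (p.1, p.2.1, m)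
  get_set _ _ := rfl
  set_set _ _ _ := rfl
  set_get _ := rfl

lemma independent_left_site (j : Fin N) : leftCoordinate.Independent (siteCoordinate j) :=
  fun _ _ _ => rfl

lemma independent_right_site (j : Fin N) : rightCoordinate.Independent (siteCoordinate j) :=
  fun _ _ _ => rfl

lemma independent_left_right : (leftCoordinate (N := N)).Independent rightCoordinate :=
  fun _ _ _ => rfl

lemma independent_site_site {i j : Fin N} (hij : i ≠ j) :
    (siteCoordinate i).Independent (siteCoordinate j) := fun p a b => by
  simp only [siteCoordinate, Function.update_comm hij]

lemma toLinAlgEquiv_basisSingleOne_single (T : Matrix (Fin 2) (Fin 2) ℂ) (s : Fin 2) :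
    Matrix.toLinAlgEquiv Finsupp.basisSingleOne T (Finsupp.single s 1)
      = ∑ r, T r s • Finsupp.single r 1 := by
  simpa using Matrix.toLinAlgEquiv_self Finsupp.basisSingleOne T s

/-- The operators on the spin `j` of `H2b N`. -/
def siteOp (j : Fin N) : Matrix (Fin 2) (Fin 2) ℂ →ₐ[ℂ] Module.End ℂ (H2b N) :=
  (siteCoordinate j).localOp.comp (Matrix.toLinAlgEquiv Finsupp.basisSingleOne).toAlgHom

lemma siteOp_apply_vac (j : Fin N) {T : Matrix (Fin 2) (Fin 2) ℂ} (hT : T 1 0 = 0) :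
    siteOp j T (vac N) = T 0 0 • vac N :=
  Coordinate.localOp_single_of_eigenvector _
    ((toLinAlgEquiv_basisSingleOne_single T 0).trans
      (by rw [Fin.sum_univ_two, hT, zero_smul, add_zero]; rfl))

/-- The tensor factors of `H2b N`. -/
inductive TensorFactor (N : ℕ)
  | left
  | site (j : Fin N)
  | right

namespace TensorFactor

variable {h : ℂ} (hs : sinh h ≠ 0) (αl αr : ℂ)

/-- The representation of `U_q(sl₂)` on a tensor factor of `H2b N`. -/
def triple : TensorFactor N → UqTriple h (Module.End ℂ (H2b N))
  | left => (vermaTriple hs αl).map leftCoordinate.localOp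
  | site j => (spinTriple h).map (siteOp j)
  | right => (vermaTriple hs αr).map rightCoordinate.localOp

lemma pairwise_range_triple_le_commutant :
    Pairwise fun i j : TensorFactor N =>
      (i.triple hs αl αr).range ≤ (j.triple hs αl αr).commutant := by
  rintro (_ | i | _) (_ | j | _) hij <;> simp only [triple] <;>
    first | exact absurd rfl hij | refine UqTriple.map_range_le_commutant _ _ fun x y => ?_
  · exact (independent_left_site j).commute_localOp _ _
  · exact independent_left_right.commute_localOp _ _
  · exact (independent_left_site i).symm.commute_localOp _ _
  · exact (independent_site_site fun H => hij (congrArg site H)).commute_localOp _ _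
  · exact (independent_right_site i).symm.commute_localOp _ _
  · exact independent_left_right.symm.commute_localOp _ _
  · exact (independent_right_site j).commute_localOp _ _

variable (N) in
/-- All tensor factors, from left to right. -/
def all : List (TensorFactor N) := left :: ((List.finRange N).map site ++ [right])

lemma nodup_all : (all N).Nodup := by
  have site_injective : Function.Injective (site (N := N)) := fun _ _ => site.inj
  simp [all, List.nodup_append, List.nodup_map_iff site_injective, List.nodup_finRange]

/-- The inhomogeneity of a tensor factor. -/
def inhomogeneity (ζl ζr : ℂ) : TensorFactor N → ℂ
  | left => ζl
  | site _ => 0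
  | right => ζr

variable (h) in
/-- The exponent `η` of the eigenvalue `e^η` of `q^(H/2)` on the highest weight vector of a tensor
factor. -/
def topWeight : TensorFactor N → ℂ
  | left => h * (αl - 1) / 2
  | site _ => h / 2
  | right => h * (αr - 1) / 2

lemma k_apply_vac (i : TensorFactor N) :
    (i.triple hs αl αr).k (vac N) = exp (i.topWeight h αl αr) • vac N := by
  have verma (α : ℂ) : (vermaTriple hs α).k (Finsupp.single 0 1)
      = exp (h * (α - 1) / 2) • Finsupp.single 0 1 := by
    simp [vermaTriple, gExp, div_mul_eq_mul_div]
  rcases i with _ | j | _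
  · exact Coordinate.localOp_single_of_eigenvector _ (verma αl)
  · exact siteOp_apply_vac j (T := (spinTriple h).k) rfl
  · exact Coordinate.localOp_single_of_eigenvector _ (verma αr)

lemma e_apply_vac (i : TensorFactor N) : (i.triple hs αl αr).e (vac N) = 0 := by
  have verma (α : ℂ) : (vermaTriple hs α).e (Finsupp.single 0 1)
      = (0 : ℂ) • Finsupp.single 0 1 := by
    simp [vermaTriple, gE]
  rw [← zero_smul ℂ (vac N)]
  rcases i with _ | j | _
  · exact Coordinate.localOp_single_of_eigenvector _ (verma αl)
  · exact siteOp_apply_vac j (T := (spinTriple h).e) rfl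
  · exact Coordinate.localOp_single_of_eigenvector _ (verma αr)

end TensorFactor

end TensorFactors

section Monodromy

variable {h : ℂ}

lemma spinTriple_lax_apply (w : ℂ) (a a' s s' : Fin 2) :
    (spinTriple h).lax (w + h / 2) a a' s s' = Rsc h w (a, s) (a', s') := by
  fin_cases a <;> fin_cases a' <;> fin_cases s <;> fin_cases s' <;>
    simp [UqTriple.lax, spinTriple, Rsc, sinh, mul_comm (exp _) (_ / _), mul_assoc,
      div_mul_eq_mul_div, ← exp_add] <;>
    ring_nf

lemma spinTriple_laxSwap_apply (w : ℂ) (a a' s s' : Fin 2) :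
    (spinTriple h).laxSwap (w + h / 2) a a' s s' = Rsc h w (s, a) (s', a') := by
  fin_cases a <;> fin_cases a' <;> fin_cases s <;> fin_cases s' <;>
    simp [UqTriple.laxSwap, spinTriple, Rsc, sinh, mul_comm (exp _) (_ / _), mul_assoc,
      div_mul_eq_mul_div, ← exp_add] <;>
    ring_nf

lemma linearCombination_gExp (α x c : ℂ) :
    Finsupp.linearCombination ℂ (gExp α x c)
      = exp x • Finsupp.linearCombination ℂ (gExp α 0 c) := by
  ext n : 2
  simp [gExp, exp_add]

lemma linearCombination_gSinh (α x c : ℂ) :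
    Finsupp.linearCombination ℂ (gSinh α x c)
      = (exp x / 2) • Finsupp.linearCombination ℂ (gExp α 0 c)
        - (exp (-x) / 2) • Finsupp.linearCombination ℂ (gExp α 0 (-c)) := by
  ext n : 2
  simp only [gExp, gSinh, sinh, exp_add, LinearMap.comp_apply, LinearMap.sub_apply,
    LinearMap.smul_apply, Finsupp.lsingle_apply, Finsupp.linearCombination_single, neg_add, neg_mul,
    exp_zero]
  module

lemma vermaTriple_lax (hs : sinh h ≠ 0) (α w : ℂ) :
    (vermaTriple hs α).lax (w + h / 2)
      = !![Finsupp.linearCombination ℂ (gSinh α (w + h / 2) (h / 2)),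
          sinh h • (Finsupp.linearCombination ℂ (gExp α (w + h / 2) (h / 2))
            * Finsupp.linearCombination ℂ gF);
          sinh h • (Finsupp.linearCombination ℂ (gE h α)
            * Finsupp.linearCombination ℂ (gExp α (-w - h / 2) (-(h / 2)))),
          Finsupp.linearCombination ℂ (gSinh α (w + h / 2) (-(h / 2)))] := by
  rw [linearCombination_gExp _ (w + h / 2), linearCombination_gExp _ (-w - h / 2),
    linearCombination_gSinh, linearCombination_gSinh, neg_neg]
  simp only [UqTriple.lax, vermaTriple, smul_mul_assoc, mul_smul_comm, smul_smul]
  ring_nf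

lemma vermaTriple_laxSwap (hs : sinh h ≠ 0) (α w : ℂ) :
    (vermaTriple hs α).laxSwap (w + h / 2)
      = !![Finsupp.linearCombination ℂ (gSinh α (w + h / 2) (h / 2)),
          sinh h • (Finsupp.linearCombination ℂ gF
            * Finsupp.linearCombination ℂ (gExp α (-w - h / 2) (h / 2)));
          sinh h • (Finsupp.linearCombination ℂ (gExp α (w + h / 2) (-(h / 2)))
            * Finsupp.linearCombination ℂ (gE h α)),
          Finsupp.linearCombination ℂ (gSinh α (w + h / 2) (-(h / 2)))] := by
  rw [linearCombination_gExp _ (w + h / 2), linearCombination_gExp _ (-w - h / 2),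
    linearCombination_gSinh, linearCombination_gSinh, neg_neg]
  simp only [UqTriple.laxSwap, vermaTriple, smul_mul_assoc, mul_smul_comm, smul_smul]
  ring_nf

variable {N : ℕ}

lemma lOp_eq (g : ℕ → ℕ →₀ ℂ) :
    (lOp g : Module.End ℂ (H2b N)) = leftCoordinate.localOp (Finsupp.linearCombination ℂ g) := by
  refine Finsupp.lhom_ext' fun p => LinearMap.ext_ring ?_
  simp [lOp, bigOp, Coordinate.localOp_single, leftCoordinate]

lemma rOp_eq (g : ℕ → ℕ →₀ ℂ) :
    (rOp g : Module.End ℂ (H2b N)) = rightCoordinate.localOp (Finsupp.linearCombination ℂ g) := by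
  refine Finsupp.lhom_ext' fun p => LinearMap.ext_ring ?_
  simp [rOp, bigOp, Coordinate.localOp_single, rightCoordinate]

lemma siteAux_apply (R : Matrix (Fin 2 × Fin 2) (Fin 2 × Fin 2) ℂ) (j : Fin N) (a a' : Fin 2) :
    siteAux R j a a' = siteOp j (Matrix.of fun s s' => R (a, s) (a', s')) := by
  refine Finsupp.lhom_ext' fun p => LinearMap.ext_ring ?_
  simp [siteAux, siteOp, bigOp, Coordinate.localOp_single, siteCoordinate, ket2,
    toLinAlgEquiv_basisSingleOne_single, Finsupp.mapDomain_add, Finsupp.mapDomain_single]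

lemma R0Vl_eq (hs : sinh h ≠ 0) (α w : ℂ) :
    R0Vl N h α w = ((vermaTriple hs α).map leftCoordinate.localOp).lax (w + h / 2) := by
  rw [UqTriple.map_lax, vermaTriple_lax]
  simp [R0Vl, lOp_eq, ← Matrix.ext_iff]

lemma RVl0_eq (hs : sinh h ≠ 0) (α w : ℂ) :
    RVl0 N h α w = ((vermaTriple hs α).map leftCoordinate.localOp).laxSwap (w + h / 2) := by
  rw [UqTriple.map_laxSwap, vermaTriple_laxSwap]
  simp [RVl0, lOp_eq, ← Matrix.ext_iff]

lemma R0Vr_eq (hs : sinh h ≠ 0) (α w : ℂ) :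
    R0Vr N h α w = ((vermaTriple hs α).map rightCoordinate.localOp).lax (w + h / 2) := by
  rw [UqTriple.map_lax, vermaTriple_lax]
  simp [R0Vr, rOp_eq, ← Matrix.ext_iff]

lemma RVr0_eq (hs : sinh h ≠ 0) (α w : ℂ) :
    RVr0 N h α w = ((vermaTriple hs α).map rightCoordinate.localOp).laxSwap (w + h / 2) := by
  rw [UqTriple.map_laxSwap, vermaTriple_laxSwap]
  simp [RVr0, rOp_eq, ← Matrix.ext_iff]

lemma R0i_eq (w : ℂ) (j : Fin N) :
    R0i N h w j = ((spinTriple h).map (siteOp j)).lax (w + h / 2) := by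
  rw [UqTriple.map_lax]
  ext1 a a'
  simp only [R0i, siteAux_apply, Matrix.map_apply, ← spinTriple_lax_apply]
  rfl

lemma Ri0_eq (w : ℂ) (j : Fin N) :
    Ri0 N h w j = ((spinTriple h).map (siteOp j)).laxSwap (w + h / 2) := by
  rw [UqTriple.map_laxSwap]
  ext1 a a'
  simp only [Ri0, siteAux_apply, Matrix.map_apply, Matrix.of_apply, Prod.swap_prod_mk,
    ← spinTriple_laxSwap_apply]
  rfl

open TensorFactor in
theorem Tcal_eq_doubleRow (hs : sinh h ≠ 0) (αl αr ζl ζr u : ℂ) :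
    Tcal N h αl αr ζl ζr u
      = doubleRow (triple hs αl αr) (inhomogeneity ζl ζr) (all N) u := by
  have shift (x : ℂ) : u - h / 2 - x + h / 2 = u - x ∧ u - h / 2 + x + h / 2 = u + x :=
    ⟨by ring, by ring⟩
  simp [Tcal, Tmon, Tmonhat, doubleRow, all, inhomogeneity, triple, R0Vl_eq hs, RVl0_eq hs,
    R0Vr_eq hs, RVr0_eq hs, R0i_eq, Ri0_eq, Function.comp_def, mul_assoc, shift]

/-- The eigenvalue of `𝒜(u)` on the reference state. -/
def chainVacuum (N : ℕ) (h αl αr ζl ζr u : ℂ) : ℂ :=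
  sinh (u + h / 2) ^ (2 * N) * Dlt h αl ζl u * Dlt h αr ζr u

lemma chainVacuum_neg (αl αr ζl ζr u : ℂ) :
    chainVacuum N h αl αr ζl ζr (-u)
      = sinh (u - h / 2) ^ (2 * N) * Dlt h αl ζl (-u) * Dlt h αr ζr (-u) := by
  rw [chainVacuum, neg_add_eq_sub, ← neg_sub, sinh_neg, (even_two_mul N).neg_pow]

open TensorFactor in
theorem isHighestWeight_Tcal (hs : sinh h ≠ 0) (αl αr ζl ζr : ℂ) :
    IsHighestWeight h (vac N) (chainVacuum N h αl αr ζl ζr) (Tcal N h αl αr ζl ζr) := by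
  rw [funext (Tcal_eq_doubleRow hs αl αr ζl ζr)]
  convert isHighestWeight_doubleRow (pairwise_range_triple_le_commutant hs αl αr)
    (k_apply_vac hs αl αr) (e_apply_vac hs αl αr) (inhomogeneity ζl ζr) nodup_all using 2 with u
  simp only [chainVacuum, pow_mul, Dlt, topWeight, inhomogeneity, all, List.map_cons,
    List.map_append, List.map_map, Function.comp_def, sub_zero, add_zero, ← sq, List.map_const',
    List.length_finRange, List.map_nil, List.prod_cons, List.prod_append, List.prod_replicate,
    List.prod_nil, mul_one]
  ring

lemma betheVec_eq_offShellVec {αl αr ζl ζr : ℂ} {M : ℕ} (v : Fin M → ℂ)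
    (hB : ∀ x y, Commute (Tcal N h αl αr ζl ζr x 0 1) (Tcal N h αl αr ζl ζr y 0 1)) :
    betheVec N h αl αr ζl ζr v
      = offShellVec (fun x => Tcal N h αl αr ζl ζr x 0 1) (vac N) v hB Finset.univ := by
  have prod_eq := Finset.noncommProd_toFinset (List.finRange M)
    (fun i => Tcal N h αl αr ζl ζr (v i) 0 1) (fun _ _ _ _ _ => hB _ _) (List.nodup_finRange M)
  simp only [List.toFinset_finRange] at prod_eq
  rw [offShellVec, prod_eq]
  rfl

end Monodromy

section Main

variable {ι : Type*} {h : ℂ}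

lemma sinh_ne_zero_of_exp_sq_ne_one (hq : exp h ^ 2 ≠ 1) : sinh h ≠ 0 := by
  refine fun hs => hq ?_
  have exp_eq : exp h = exp (-h) := by linear_combination 2 * hs - two_sinh h
  rw [sq]
  nth_rw 2 [exp_eq]
  rw [← exp_add, add_neg_cancel, exp_zero]

lemma dressedVacuum_eq_dressedVacuum_neg {a : ℂ → ℂ} {v : ι → ℂ} {s : Finset ι} {x : ℂ}
    (H : a x * ∏ k ∈ s, (sinh (x - v k - h) * sinh (x + v k - h))
      = a (-x) * ∏ k ∈ s, (sinh (x - v k + h) * sinh (x + v k + h))) :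
    dressedVacuum h a v s x = dressedVacuum h a v s (-x) := by
  simp only [dressedVacuum, scatter_neg]
  simp only [scatter, Finset.prod_div_distrib, mul_div_assoc', H]

end Main

end TwoBoundary

open Complex TwoBoundary in
theorem two_boundary_algebraic_bethe_ansatz_general (N : ℕ) (h αl αr ζl ζr : ℂ)
    (hq : exp h ^ 2 ≠ 1) (M : ℕ) (v : Fin M → ℂ) (hv : ∀ m, sinh (2 * v m) ≠ 0)
    (hvv : ∀ m k, m ≠ k → sinh (v m - v k) ≠ 0 ∧ sinh (v m + v k) ≠ 0)
    (hBAE : ∀ m,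
      sinh (v m + h / 2) ^ (2 * N) * Dlt h αl ζl (v m) * Dlt h αr ζr (v m) *
          ∏ k ∈ Finset.univ.erase m, (sinh (v m - v k - h) * sinh (v m + v k - h))
        = sinh (v m - h / 2) ^ (2 * N) * Dlt h αl ζl (-v m) * Dlt h αr ζr (-v m) *
          ∏ k ∈ Finset.univ.erase m, (sinh (v m - v k + h) * sinh (v m + v k + h)))
    (u : ℂ) (hu : sinh (2 * u) ≠ 0) (huv : ∀ m, sinh (u - v m) ≠ 0 ∧ sinh (u + v m) ≠ 0) :
    t2b N h αl αr ζl ζr u (betheVec N h αl αr ζl ζr v)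
      = (sinh (u + h / 2) ^ (2 * N) * Dlt h αl ζl u * Dlt h αr ζr u *
            (sinh (2 * u + h) / sinh (2 * u)) *
            ∏ m, (sinh (u - v m - h) * sinh (u + v m - h) / (sinh (u - v m) * sinh (u + v m)))
          + sinh (u - h / 2) ^ (2 * N) * Dlt h αl ζl (-u) * Dlt h αr ζr (-u) *
            (sinh (2 * u - h) / sinh (2 * u)) *
            ∏ m, (sinh (u - v m + h) * sinh (u + v m + h) / (sinh (u - v m) * sinh (u + v m)))) •
          betheVec N h αl αr ζl ζr v := by
  have hs : sinh h ≠ 0 := sinh_ne_zero_of_exp_sq_ne_one hq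
  have hK := isHighestWeight_Tcal (N := N) hs αl αr ζl ζr
  have eigen := hK.smul_transfer_apply_offShellVec (v := v) (s := Finset.univ)
    (fun m _ k _ hmk => ⟨hv k, hvv m k hmk⟩)
    (fun m _ => dressedVacuum_eq_dressedVacuum_neg (by rw [chainVacuum_neg]; exact hBAE m))
    fun m _ => ⟨hv m, huv m⟩
  rw [← betheVec_eq_offShellVec] at eigen
  refine ((eq_inv_smul_iff₀ hu).2 eigen).trans ?_
  rw [smul_smul]
  simp only [dressedVacuum, scatter_neg, chainVacuum_neg]
  simp only [chainVacuum, scatter]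
  congr 1
  ring

/-- Algebraic Bethe ansatz for the two-boundary transfer matrix: if the Bethe
roots `v_1, …, v_M` are generic and satisfy the Bethe ansatz equations, then the Bethe vector
`B(v_1) ⋯ B(v_M)|⇑⟩` is an eigenvector of `t_{2b}(u)` with the standard eigenvalue `Λ(u)`. -/
theorem two_boundary_algebraic_bethe_ansatz (N : ℕ) (hN : 1 ≤ N)
    (h αl αr ζl ζr : ℂ) (hq : Complex.exp h ^ 2 ≠ 1)
    (hαl : Complex.exp (h * αl) ≠ Complex.exp (-(h * αl)))
    (hαr : Complex.exp (h * αr) ≠ Complex.exp (-(h * αr)))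
    (M : ℕ) (v : Fin M → ℂ)
    (hgen1 : ∀ m : Fin M, Complex.sinh (2 * v m) ≠ 0 ∧
      Complex.sinh (2 * v m + h) ≠ 0 ∧ Complex.sinh (2 * v m - h) ≠ 0)
    (hgen2 : ∀ m k : Fin M, m ≠ k →
      Complex.sinh (v m - v k) ≠ 0 ∧ Complex.sinh (v m + v k) ≠ 0 ∧
      Complex.sinh (v m - v k + h) ≠ 0 ∧ Complex.sinh (v m - v k - h) ≠ 0 ∧
      Complex.sinh (v m + v k + h) ≠ 0 ∧ Complex.sinh (v m + v k - h) ≠ 0)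
    (hBAE : ∀ m : Fin M,
      Complex.sinh (v m + h / 2) ^ (2 * N) * Dlt h αl ζl (v m) * Dlt h αr ζr (v m) *
          ∏ k ∈ Finset.univ.erase m,
            (Complex.sinh (v m - v k - h) * Complex.sinh (v m + v k - h))
        = Complex.sinh (v m - h / 2) ^ (2 * N) * Dlt h αl ζl (-v m) * Dlt h αr ζr (-v m) *
            ∏ k ∈ Finset.univ.erase m,
              (Complex.sinh (v m - v k + h) * Complex.sinh (v m + v k + h))) :
    ∀ u : ℂ, Complex.sinh (2 * u) ≠ 0 →
      (∀ m : Fin M, Complex.sinh (u - v m) ≠ 0 ∧ Complex.sinh (u + v m) ≠ 0) →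
      t2b N h αl αr ζl ζr u (betheVec N h αl αr ζl ζr v)
        = (Complex.sinh (u + h / 2) ^ (2 * N) * Dlt h αl ζl u * Dlt h αr ζr u *
              (Complex.sinh (2 * u + h) / Complex.sinh (2 * u)) *
              ∏ m : Fin M,
                (Complex.sinh (u - v m - h) * Complex.sinh (u + v m - h) /
                  (Complex.sinh (u - v m) * Complex.sinh (u + v m)))
            + Complex.sinh (u - h / 2) ^ (2 * N) * Dlt h αl ζl (-u) * Dlt h αr ζr (-u) *
              (Complex.sinh (2 * u - h) / Complex.sinh (2 * u)) *
              ∏ m : Fin M,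
                (Complex.sinh (u - v m + h) * Complex.sinh (u + v m + h) /
                  (Complex.sinh (u - v m) * Complex.sinh (u + v m)))) •
            betheVec N h αl αr ζl ζr v :=
  fun u hu huv => two_boundary_algebraic_bethe_ansatz_general N h αl αr ζl ζr hq M v
    (fun m => (hgen1 m).1) (fun m k hmk => ⟨(hgen2 m k hmk).1, (hgen2 m k hmk).2.1⟩) hBAE u hu huv
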